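/- Let N ≥ 1 and p > 1, and let u_0 ∈ L^1(ℝ^N). Suppose v : ℝ^N × (0, ∞) → ℝ satisfies: (a) for each t > 0, x ↦ v(x, t) is differentiable; (b) for every t > 0 and almost every x ∈ ℝ^N, v(x, t) = (P_t * u_0)(x) + ∫_0^t (P_{t−τ} * |∇v(·, τ)|^p)(x) dτ; (c) for every q ∈ [1, ∞] and j ∈ {0, 1}, sup_{t > 0} (1+t)^{N(1 − 1/q) + j} ‖∇^j v(·, t)‖_{L^q(ℝ^N)} < ∞ (where ∇^0 v = v and ∇^1 v = ∇v). Let C_* := ∫_{ℝ^N} u_0(x) dx + ∫_0^∞ ∫_{ℝ^N} ‖∇_x v(x, τ)‖^p dx dτ (this quantity being finite under the above hypotheses). Then for every q ∈ [1, ∞]: lim_{t → ∞} t^{N(1 − 1/q)} ‖v(·, t) − C_* P_{t+1}‖_{L^q(ℝ^N)} = 0. -/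

import Mathlib

open MeasureTheory Real Filter ENNReal

/-- The normalizing constant of the Poisson kernel on `ℝ^N`. -/
noncomputable def cN (N : ℕ) : ℝ :=
  Real.Gamma (((N : ℝ) + 1) / 2) / Real.pi ^ (((N : ℝ) + 1) / 2)

/-- The Poisson kernel `P(x) = c_N (1 + ‖x‖²)^{-(N+1)/2}` on `ℝ^N`. -/
noncomputable def P (N : ℕ) (x : EuclideanSpace ℝ (Fin N)) : ℝ :=
  cN N * (1 + ‖x‖ ^ 2) ^ (-(((N : ℝ) + 1) / 2))

/-- The dilated Poisson kernel `P_t(x) = t^{-N} P(x/t)`. -/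
noncomputable def Pt (N : ℕ) (t : ℝ) (x : EuclideanSpace ℝ (Fin N)) : ℝ :=
  t ^ (-(N : ℝ)) * P N (t⁻¹ • x)


/-- short name for Euclidean space -/
abbrev Eu (N : ℕ) := EuclideanSpace ℝ (Fin N)

/-- total mass of the kernel -/
noncomputable def kap (N : ℕ) : ℝ := ∫ x, P N x

theorem cN_pos (N : ℕ) : 0 < cN N := by
  unfold cN
  apply div_pos
  · apply Real.Gamma_pos_of_pos; positivity
  · apply Real.rpow_pos_of_pos Real.pi_pos

theorem P_pos (N : ℕ) (x : Eu N) : 0 < P N x := by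
  unfold P
  exact mul_pos (cN_pos N) (Real.rpow_pos_of_pos (by positivity) _)

theorem P_le (N : ℕ) (x : Eu N) : P N x ≤ cN N := by
  unfold P
  have : (1 + ‖x‖ ^ 2) ^ (-(((N : ℝ) + 1) / 2)) ≤ 1 := by
    apply Real.rpow_le_one_of_one_le_of_nonpos
    · nlinarith [sq_nonneg ‖x‖]
    · have : (0:ℝ) ≤ ((N : ℝ) + 1) / 2 := by positivity
      linarith
  nlinarith [cN_pos N]

theorem continuous_P (N : ℕ) : Continuous (P N) := by
  unfold P
  refine continuous_const.mul ?_
  refine Continuous.rpow_const (by fun_prop) ?_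
  intro x; left; positivity

theorem Pt_pos (N : ℕ) {t : ℝ} (ht : 0 < t) (x : Eu N) : 0 < Pt N t x := by
  unfold Pt
  exact mul_pos (Real.rpow_pos_of_pos ht _) (P_pos N _)

theorem Pt_le (N : ℕ) {t : ℝ} (ht : 0 < t) (x : Eu N) : Pt N t x ≤ cN N * t ^ (-(N:ℝ)) := by
  unfold Pt
  rw [mul_comm]
  exact mul_le_mul_of_nonneg_right (P_le N _) (Real.rpow_nonneg ht.le _)

theorem measurable_Pt (N : ℕ) : Measurable (fun q : ℝ × Eu N => Pt N q.1 q.2) := by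
  unfold Pt
  have h := (continuous_P N).measurable
  refine Measurable.mul (by fun_prop) ?_
  exact h.comp (by fun_prop)

theorem continuousAt_Pt (N : ℕ) (q : ℝ × Eu N) (hq : 0 < q.1) :
    ContinuousAt (fun q : ℝ × Eu N => Pt N q.1 q.2) q := by
  unfold Pt
  refine ContinuousAt.mul ?_ ?_
  · exact ContinuousAt.rpow_const continuousAt_fst (Or.inl hq.ne')
  · refine (continuous_P N).continuousAt.comp ?_
    exact (continuousAt_fst.inv₀ hq.ne').smul continuousAt_snd

theorem continuous_Pt (N : ℕ) (t : ℝ) : Continuous (Pt N t) := by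
  unfold Pt
  exact continuous_const.mul ((continuous_P N).comp (by fun_prop))

theorem Pt_eq (N : ℕ) {t : ℝ} (ht : 0 < t) (x : Eu N) :
    Pt N t x = cN N * (t * (t ^ 2 + ‖x‖ ^ 2) ^ (-(((N : ℝ) + 1) / 2))) := by
  unfold Pt P
  have h1 : (1 + ‖t⁻¹ • x‖ ^ 2) = (t ^ 2)⁻¹ * (t ^ 2 + ‖x‖ ^ 2) := by
    rw [norm_smul, norm_inv, Real.norm_of_nonneg ht.le]
    field_simp
  rw [h1, Real.mul_rpow (by positivity) (by positivity)]
  have h2 : ((t ^ 2)⁻¹) ^ (-(((N : ℝ) + 1) / 2)) = t ^ ((N:ℝ) + 1) := by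
    rw [Real.inv_rpow (by positivity), Real.rpow_neg (by positivity), inv_inv,
      ← Real.rpow_natCast, ← Real.rpow_mul ht.le]
    congr 1; push_cast; ring
  rw [h2, Real.rpow_add ht, Real.rpow_one]
  have h3 : t ^ (-(N:ℝ)) * t ^ (N:ℝ) = 1 := by
    rw [← Real.rpow_add ht]; simp
  linear_combination (cN N * t * (t ^ 2 + ‖x‖ ^ 2) ^ (-(((N : ℝ) + 1) / 2))) * h3

theorem integrable_P (N : ℕ) : Integrable (P N) := by
  unfold P
  refine Integrable.const_mul ?_ _
  have := integrable_rpow_neg_one_add_norm_sq (E := Eu N) (μ := volume) (r := (N:ℝ) + 1) (by simp)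
  rw [neg_div] at this
  exact this

theorem kap_pos (N : ℕ) : 0 < kap N := by
  unfold kap
  rw [integral_pos_iff_support_of_nonneg (fun x => (P_pos N x).le) (integrable_P N)]
  have : Function.support (P N) = Set.univ := by
    ext x; simp [(P_pos N x).ne']
  rw [this]
  exact (Measure.measure_univ_pos).2 (NeZero.ne _)

theorem integrable_Pt (N : ℕ) {t : ℝ} (ht : 0 < t) : Integrable (Pt N t) := by
  unfold Pt
  exact ((integrable_P N).comp_smul (inv_ne_zero ht.ne')).const_mul _

theorem integral_Pt (N : ℕ) {t : ℝ} (ht : 0 < t) : ∫ x, Pt N t x = kap N := by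
  unfold Pt
  rw [integral_const_mul, Measure.integral_comp_inv_smul_of_nonneg _ _ ht.le]
  simp only [finrank_euclideanSpace, Fintype.card_fin, smul_eq_mul]
  rw [← mul_assoc, ← Real.rpow_natCast, ← Real.rpow_add ht]
  simp [kap]

theorem lintegral_Pt (N : ℕ) {t : ℝ} (ht : 0 < t) :
    ∫⁻ x, ENNReal.ofReal (Pt N t x) = ENNReal.ofReal (kap N) := by
  rw [← integral_Pt N ht, ofReal_integral_eq_lintegral_ofReal (integrable_Pt N ht)]
  exact Eventually.of_forall fun x => (Pt_pos N ht x).le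

theorem lintegral_Pt_sub (N : ℕ) {t : ℝ} (ht : 0 < t) (y : Eu N) :
    ∫⁻ x, ENNReal.ofReal (Pt N t (x - y)) = ENNReal.ofReal (kap N) := by
  rw [lintegral_sub_right_eq_self (fun x => ENNReal.ofReal (Pt N t x)), lintegral_Pt N ht]

theorem lintegral_Pt_sub' (N : ℕ) {t : ℝ} (ht : 0 < t) (x : Eu N) :
    ∫⁻ y, ENNReal.ofReal (Pt N t (x - y)) = ENNReal.ofReal (kap N) := by
  rw [lintegral_sub_left_eq_self (fun x => ENNReal.ofReal (Pt N t x)), lintegral_Pt N ht]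

/-- scaling in an approximate identity -/
theorem integral_Pt_mul (N : ℕ) {t : ℝ} (ht : 0 < t) (y : Eu N) (f : Eu N → ℝ) :
    ∫ x, Pt N t (x - y) * f x = ∫ z, P N z * f (y + t • z) := by
  have h1 : ∫ x, Pt N t (x - y) * f x = ∫ x, Pt N t x * f (y + x) := by
    rw [← integral_sub_right_eq_self (fun x => Pt N t x * f (y + x)) y]
    simp
  rw [h1]
  have h2 := Measure.integral_comp_inv_smul_of_nonneg (E := Eu N) volume
    (fun z => P N z * f (y + t • z)) ht.le
  simp only [finrank_euclideanSpace, Fintype.card_fin, smul_eq_mul, smul_inv_smul₀ ht.ne'] at h2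
  unfold Pt
  simp only [mul_assoc]
  rw [integral_const_mul, h2, ← mul_assoc, ← Real.rpow_natCast, ← Real.rpow_add ht]
  simp

/-- comparison factor -/
noncomputable def Lam (N : ℕ) (l b : ℝ) : ℝ :=
  l * (l ^ 2 * (1 + b + b ^ 2)) ^ (((N:ℝ) + 1) / 2)

set_option maxHeartbeats 800000 in
theorem Pt_compare (N : ℕ) {s r : ℝ} (hs : 0 < s) (hsr : s ≤ r) (x y : Eu N) :
    |Pt N s (x - y) - Pt N r x| ≤ (Lam N (r / s) (‖y‖ / r) - 1) * Pt N r x := by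
  have hr : 0 < r := hs.trans_le hsr
  set l := r / s with hl
  set b := ‖y‖ / r with hb
  have hl1 : 1 ≤ l := by rw [hl, le_div_iff₀ hs]; linarith
  have hb0 : 0 ≤ b := by positivity
  have hyb : ‖y‖ = b * r := by rw [hb]; field_simp
  have hrl : r = l * s := by rw [hl]; field_simp
  set a : ℝ := ((N:ℝ) + 1) / 2 with ha
  have ha0 : 0 < a := by positivity
  set X := s ^ 2 + ‖x - y‖ ^ 2 with hX
  set Y := r ^ 2 + ‖x‖ ^ 2 with hY
  have hXp : 0 < X := by positivity
  have hYp : 0 < Y := by positivity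
  set Z := r ^ 2 + ‖x - y‖ ^ 2 with hZ
  have key : ∀ c d : ℝ, 0 ≤ c → 0 ≤ d → d ≤ c + ‖y‖ → r ^ 2 + d ^ 2 ≤ (1 + b + b ^ 2) * (r ^ 2 + c ^ 2) := by
    intro c d hc hd h
    rw [hyb] at h
    have h1 : d ^ 2 ≤ (c + b * r) ^ 2 := by gcongr
    nlinarith [mul_nonneg hb0 (sq_nonneg (c - r)), mul_nonneg (sq_nonneg b) (sq_nonneg c)]
  have hZY : Z ≤ (1 + b + b ^ 2) * Y := key ‖x‖ ‖x - y‖ (norm_nonneg _) (norm_nonneg _) (norm_sub_le _ _)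
  have hYZ : Y ≤ (1 + b + b ^ 2) * Z := key ‖x - y‖ ‖x‖ (norm_nonneg _) (norm_nonneg _) (by
    have := norm_add_le (x - y) y; simpa using this)
  have hXZ : X ≤ Z := by
    have : s ^ 2 ≤ r ^ 2 := by gcongr
    linarith
  have hl2 : 1 ≤ l ^ 2 := by nlinarith
  have hZX : Z ≤ l ^ 2 * X := by
    rw [hZ, hX, hrl]
    nlinarith [sq_nonneg ‖x - y‖]
  set L0 := l ^ 2 * (1 + b + b ^ 2) with hL0
  have hB1 : 1 ≤ 1 + b + b ^ 2 := by nlinarith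
  have hL01 : 1 ≤ L0 := by nlinarith
  have hXY : X ≤ L0 * Y := by
    have : (1 + b + b ^ 2) * Y ≤ L0 * Y := by
      apply mul_le_mul_of_nonneg_right _ hYp.le
      nlinarith
    linarith
  have hYX : Y ≤ L0 * X := by
    have : (1 + b + b ^ 2) * Z ≤ (1 + b + b ^ 2) * (l ^ 2 * X) := by gcongr
    rw [hL0]; nlinarith
  have e1 : X ^ (-a) ≤ L0 ^ a * Y ^ (-a) := by
    rw [Real.rpow_neg hXp.le, Real.rpow_neg hYp.le, ← div_eq_mul_inv, inv_eq_one_div,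
      div_le_div_iff₀ (by positivity) (by positivity), one_mul, ← Real.mul_rpow (by positivity) hXp.le]
    exact Real.rpow_le_rpow hYp.le hYX ha0.le
  have e2 : Y ^ (-a) ≤ L0 ^ a * X ^ (-a) := by
    rw [Real.rpow_neg hXp.le, Real.rpow_neg hYp.le, ← div_eq_mul_inv, inv_eq_one_div,
      div_le_div_iff₀ (by positivity) (by positivity), one_mul, ← Real.mul_rpow (by positivity) hYp.le]
    exact Real.rpow_le_rpow hXp.le hXY ha0.le
  have hLam : Lam N l b = l * L0 ^ a := rfl
  rw [Pt_eq N hs, Pt_eq N hr, hLam]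
  rw [← hX, ← hY, ← ha]
  have hc := cN_pos N
  have hXa : 0 < X ^ (-a) := Real.rpow_pos_of_pos hXp _
  have hYa : 0 < Y ^ (-a) := Real.rpow_pos_of_pos hYp _
  have hLa : 1 ≤ L0 ^ a := Real.one_le_rpow hL01 ha0.le
  set U := cN N * (s * X ^ (-a)) with hU
  set V := cN N * (r * Y ^ (-a)) with hV
  have hUp : 0 < U := by positivity
  have hVp : 0 < V := by positivity
  have hUV : U ≤ L0 ^ a * V := by
    calc U ≤ cN N * (r * (L0 ^ a * Y ^ (-a))) := by rw [hU]; gcongr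
      _ = L0 ^ a * V := by rw [hV]; ring
  have hVU : V ≤ l * L0 ^ a * U := by
    calc V ≤ cN N * ((l * s) * (L0 ^ a * X ^ (-a))) := by rw [hV, ← hrl]; gcongr
      _ = l * L0 ^ a * U := by rw [hU]; ring
  set Q := l * L0 ^ a with hQ
  have hLQ : L0 ^ a ≤ Q := le_mul_of_one_le_left (zero_le_one.trans hLa) hl1
  have hQ1 : 1 ≤ Q := hLa.trans hLQ
  clear_value Q U V
  clear hXa hYa e1 e2 key hXY hYX hZX hXZ hYZ hZY
  have hUQ : U ≤ Q * V := hUV.trans (by gcongr)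
  rw [abs_le]
  constructor
  · -- V - U ≤ (Q-1) V
    by_cases hVU' : V ≤ U
    · nlinarith [mul_nonneg (sub_nonneg.2 hQ1) hVp.le]
    · push Not at hVU'
      have : V - U ≤ (Q - 1) * U := by linarith
      have h2 : (Q - 1) * U ≤ (Q - 1) * V :=
        mul_le_mul_of_nonneg_left hVU'.le (sub_nonneg.2 hQ1)
      linarith
  · linarith

theorem interp_bound (N : ℕ) (f : Eu N → ℝ) {t : ℝ} (ht : 0 < t) (ε : ℝ≥0∞)
    (hsup : ∀ᵐ x, ‖f x‖ₑ ≤ ε * ENNReal.ofReal (t ^ (-(N:ℝ))))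
    (hintg : ∫⁻ x, ‖f x‖ₑ ≤ ε) (q : ℝ≥0∞) (hq : 1 ≤ q) :
    ENNReal.ofReal (t ^ ((N : ℝ) * (1 - (1 / q).toReal))) * eLpNorm f q volume ≤ ε := by
  by_cases hε : ε = ⊤
  · rw [hε]; exact le_top
  by_cases hqt : q = ⊤
  · subst hqt
    have h1 : eLpNorm f ⊤ volume ≤ ε * ENNReal.ofReal (t ^ (-(N:ℝ))) := by
      rw [eLpNorm_exponent_top]
      exact essSup_le_of_ae_le _ hsup
    calc _ ≤ ENNReal.ofReal (t ^ ((N : ℝ) * (1 - ((1:ℝ≥0∞) / ⊤).toReal))) * (ε * ENNReal.ofReal (t ^ (-(N:ℝ)))) := by gcongr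
      _ = ε * (ENNReal.ofReal (t ^ (N : ℝ)) * ENNReal.ofReal (t ^ (-(N:ℝ)))) := by
          simp; ring
      _ = ε := by
          rw [← ENNReal.ofReal_mul (by positivity), ← Real.rpow_add ht]; simp
  have hq0 : q ≠ 0 := (zero_lt_one.trans_le hq).ne'
  set r := q.toReal with hr
  have hr1 : 1 ≤ r := by
    rw [hr, ← ENNReal.toReal_one]; exact ENNReal.toReal_mono hqt hq
  have hr0 : 0 < r := by linarith
  set T := ENNReal.ofReal (t ^ (-(N:ℝ))) with hT
  have hTt : T ≠ ⊤ := ENNReal.ofReal_ne_top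
  have h2 : ∫⁻ x, ‖f x‖ₑ ^ r ≤ ε ^ r * T ^ (r - 1) := by
    calc ∫⁻ x, ‖f x‖ₑ ^ r ≤ ∫⁻ x, (ε * T) ^ (r - 1) * ‖f x‖ₑ := by
          apply lintegral_mono_ae
          filter_upwards [hsup] with x hx
          have : ‖f x‖ₑ ^ r = ‖f x‖ₑ ^ (r - 1) * ‖f x‖ₑ := by
            nth_rewrite 3 [← ENNReal.rpow_one ‖f x‖ₑ]
            rw [← ENNReal.rpow_add_of_nonneg _ _ (by linarith) (by norm_num)]
            congr 1; ring
          rw [this]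
          gcongr
      _ = (ε * T) ^ (r - 1) * ∫⁻ x, ‖f x‖ₑ := by
          rw [lintegral_const_mul']
          exact ENNReal.rpow_ne_top_of_nonneg (by linarith) (ENNReal.mul_ne_top hε hTt)
      _ ≤ (ε * T) ^ (r - 1) * ε := by gcongr
      _ = ε ^ r * T ^ (r - 1) := by
          rw [ENNReal.mul_rpow_of_nonneg _ _ (by linarith)]
          have : ε ^ r = ε ^ (r - 1) * ε := by
            nth_rewrite 3 [← ENNReal.rpow_one ε]
            rw [← ENNReal.rpow_add_of_nonneg _ _ (by linarith) (by norm_num)]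
            congr 1; ring
          rw [this]; ring
  have h3 : eLpNorm f q volume ≤ ε * T ^ (1 - 1 / r) := by
    rw [eLpNorm_eq_lintegral_rpow_enorm_toReal hq0 hqt, ← hr]
    calc _ ≤ (ε ^ r * T ^ (r - 1)) ^ (1 / r) := by gcongr
      _ = ε * T ^ (1 - 1 / r) := by
        rw [ENNReal.mul_rpow_of_nonneg _ _ (by positivity), ← ENNReal.rpow_mul, ← ENNReal.rpow_mul]
        congr 2
        · field_simp; simp
        · field_simp
  have h4 : ENNReal.ofReal (t ^ ((N : ℝ) * (1 - (1 / q).toReal))) * T ^ (1 - 1 / r) = 1 := by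
    have : (1 / q).toReal = 1 / r := by rw [hr]; simp
    rw [this, hT, ENNReal.ofReal_rpow_of_pos (by positivity), ← ENNReal.ofReal_mul (by positivity),
      ← Real.rpow_mul ht.le, ← Real.rpow_add ht]
    simp
  calc _ ≤ ENNReal.ofReal (t ^ ((N : ℝ) * (1 - (1 / q).toReal))) * (ε * T ^ (1 - 1 / r)) := by gcongr
    _ = ε * (ENNReal.ofReal (t ^ ((N : ℝ) * (1 - (1 / q).toReal))) * T ^ (1 - 1 / r)) := by ring
    _ = ε := by rw [h4, mul_one]

/-- crude constant -/
noncomputable def Cc (N : ℕ) : ℝ := cN N * (2 ^ N + 1) + 2 * kap N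

theorem Cc_pos (N : ℕ) : 0 < Cc N := by
  unfold Cc; have := cN_pos N; have := kap_pos N; positivity

/-- error coefficient -/
noncomputable def theta (N : ℕ) (t τ : ℝ) (y : Eu N) : ℝ :=
  if τ < t / 2 then Cc N * min 1 (Lam N ((t + 1) / (t - τ)) (‖y‖ / (t + 1)) - 1) else Cc N

/-- truncated difference of kernels -/
noncomputable def Dk (N : ℕ) (t τ : ℝ) (y x : Eu N) : ℝ :=
  (if τ < t / 2 then Pt N (t - τ) (x - y) else 0) - Pt N (t + 1) x

theorem Lam_ge_one (N : ℕ) {l b : ℝ} (hl : 1 ≤ l) (hb : 0 ≤ b) : 1 ≤ Lam N l b := by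
  unfold Lam
  have : 1 ≤ l ^ 2 * (1 + b + b ^ 2) := by
    have h1 : 1 ≤ l ^ 2 := by nlinarith
    have h2 : 1 ≤ 1 + b + b ^ 2 := by nlinarith
    nlinarith
  have h3 : 1 ≤ (l ^ 2 * (1 + b + b ^ 2)) ^ (((N:ℝ) + 1) / 2) :=
    Real.one_le_rpow this (by positivity)
  nlinarith

theorem theta_le (N : ℕ) (t τ : ℝ) (y : Eu N) : theta N t τ y ≤ Cc N := by
  unfold theta
  split_ifs
  · have := Cc_pos N
    have h := min_le_left 1 (Lam N ((t + 1) / (t - τ)) (‖y‖ / (t + 1)) - 1)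
    nlinarith
  · exact le_rfl

theorem theta_nonneg (N : ℕ) {t τ : ℝ} (ht : 0 < t) (hτ : 0 ≤ τ) (y : Eu N) : 0 ≤ theta N t τ y := by
  unfold theta
  split_ifs with h
  · have := Cc_pos N
    have h1 : 1 ≤ (t + 1) / (t - τ) := by rw [le_div_iff₀ (by linarith)]; linarith
    have h := Lam_ge_one N (b := ‖y‖ / (t + 1)) h1 (by positivity)
    exact mul_nonneg this.le (le_min zero_le_one (by linarith))
  · exact (Cc_pos N).le

theorem theta_tendsto (N : ℕ) (τ : ℝ) (y : Eu N) :
    Tendsto (fun t => theta N t τ y) atTop (nhds 0) := by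
  have h1 : Tendsto (fun t : ℝ => (t + 1) / (t - τ)) atTop (nhds 1) := by
    have : Tendsto (fun t : ℝ => 1 + (1 + τ) / (t - τ)) atTop (nhds (1 + 0)) := by
      refine tendsto_const_nhds.add ?_
      exact tendsto_const_nhds.div_atTop (tendsto_atTop_add_const_right _ (-τ) tendsto_id)
    rw [add_zero] at this
    refine this.congr' ?_
    filter_upwards [eventually_gt_atTop τ] with t ht
    have : t - τ ≠ 0 := by linarith
    field_simp; ring
  have h2 : Tendsto (fun t : ℝ => ‖y‖ / (t + 1)) atTop (nhds 0) :=
    tendsto_const_nhds.div_atTop (tendsto_atTop_add_const_right _ 1 tendsto_id)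
  have h3 : Tendsto (fun t : ℝ => Lam N ((t + 1) / (t - τ)) (‖y‖ / (t + 1))) atTop (nhds 1) := by
    unfold Lam
    have := h1.mul ((((h1.pow 2).mul ((h2.const_add 1).add (h2.pow 2))).rpow_const
      (p := ((N:ℝ) + 1) / 2) (Or.inl (by norm_num))))
    simpa using this
  have h4 : Tendsto (fun t : ℝ => Cc N * min 1 (Lam N ((t + 1) / (t - τ)) (‖y‖ / (t + 1)) - 1)) atTop (nhds 0) := by
    have := (tendsto_const_nhds (x := Cc N)).mul ((tendsto_const_nhds (x := (1:ℝ))).min (h3.sub_const 1))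
    simpa using this
  refine h4.congr' ?_
  filter_upwards [eventually_gt_atTop (2 * τ)] with t ht
  unfold theta
  rw [if_pos (by linarith)]

theorem measurable_theta (N : ℕ) (t : ℝ) : Measurable (fun q : ℝ × Eu N => theta N t q.1 q.2) := by
  unfold theta Lam
  refine Measurable.ite (measurableSet_lt measurable_fst measurable_const) ?_ measurable_const
  fun_prop

theorem measurable_Dk (N : ℕ) (t : ℝ) :
    Measurable (fun q : (ℝ × Eu N) × Eu N => Dk N t q.1.1 q.1.2 q.2) := by
  unfold Dk
  refine Measurable.sub (Measurable.ite (measurableSet_lt (by fun_prop) measurable_const) ?_ measurable_const) ?_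
  · exact (measurable_Pt N).comp (f := fun q : (ℝ × Eu N) × Eu N => (t - q.1.1, q.2 - q.1.2)) (by fun_prop)
  · exact (measurable_Pt N).comp (f := fun q : (ℝ × Eu N) × Eu N => (t + 1, q.2)) (by fun_prop)

theorem Dk_sup (N : ℕ) {t τ : ℝ} (ht : 0 < t) (hτ : 0 ≤ τ) (y x : Eu N) :
    |Dk N t τ y x| ≤ theta N t τ y * t ^ (-(N:ℝ)) := by
  have hc := cN_pos N
  have hk := kap_pos N
  have hT : 0 < t ^ (-(N:ℝ)) := Real.rpow_pos_of_pos ht _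
  have hr : Pt N (t + 1) x ≤ cN N * t ^ (-(N:ℝ)) := by
    refine (Pt_le N (by linarith) x).trans ?_
    refine mul_le_mul_of_nonneg_left ?_ hc.le
    exact Real.rpow_le_rpow_of_nonpos ht (by linarith) (by simp)
  have hrp := Pt_pos N (show 0 < t + 1 by linarith) x
  have h2N : (1:ℝ) ≤ 2 ^ N := one_le_pow₀ (by norm_num)
  have hCc : cN N ≤ Cc N := by unfold Cc; nlinarith
  unfold Dk theta
  split_ifs with h
  · have hs : 0 < t - τ := by linarith
    have hsp := Pt_pos N hs (x - y)
    have hs1 : Pt N (t - τ) (x - y) ≤ cN N * 2 ^ N * t ^ (-(N:ℝ)) := by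
      refine (Pt_le N hs _).trans ?_
      rw [mul_assoc]
      gcongr
      have : (2:ℝ) ^ N * t ^ (-(N:ℝ)) = (t / 2) ^ (-(N:ℝ)) := by
        rw [Real.div_rpow ht.le (by norm_num), Real.rpow_neg (by norm_num : (0:ℝ) ≤ 2), Real.rpow_natCast]
        field_simp
      rw [this]
      exact Real.rpow_le_rpow_of_nonpos (by linarith) (by linarith) (by simp)
    rcases min_choice (1:ℝ) (Lam N ((t + 1) / (t - τ)) (‖y‖ / (t + 1)) - 1) with hm | hm
    · rw [hm, mul_one]
      have : |Pt N (t - τ) (x - y) - Pt N (t + 1) x| ≤ Pt N (t - τ) (x - y) + Pt N (t + 1) x := by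
        rw [abs_le]; constructor <;> linarith
      have h5 : cN N * 2 ^ N * t ^ (-(N:ℝ)) + cN N * t ^ (-(N:ℝ)) ≤ Cc N * t ^ (-(N:ℝ)) := by
        rw [← add_mul]
        apply mul_le_mul_of_nonneg_right _ hT.le
        unfold Cc; nlinarith
      linarith
    · rw [hm]
      refine (Pt_compare N hs (by linarith) x y).trans ?_
      have h1 : 1 ≤ (t + 1) / (t - τ) := by rw [le_div_iff₀ (by linarith)]; linarith
      have h := Lam_ge_one N (b := ‖y‖ / (t + 1)) h1 (by positivity)
      have h6 : Pt N (t + 1) x ≤ Cc N * t ^ (-(N:ℝ)) := hr.trans (by gcongr)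
      calc _ ≤ (Lam N ((t + 1) / (t - τ)) (‖y‖ / (t + 1)) - 1) * (Cc N * t ^ (-(N:ℝ))) := by
            apply mul_le_mul_of_nonneg_left h6; linarith
        _ = _ := by ring
  · rw [zero_sub, abs_neg, abs_of_pos hrp]
    exact hr.trans (by gcongr)

theorem Dk_int (N : ℕ) {t τ : ℝ} (ht : 0 < t) (hτ : 0 ≤ τ) (y : Eu N) :
    ∫⁻ x, ‖Dk N t τ y x‖ₑ ≤ ENNReal.ofReal (theta N t τ y) := by
  have hc := cN_pos N
  have hk := kap_pos N
  have hr := lintegral_Pt N (show 0 < t + 1 by linarith)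
  have h2N : (1:ℝ) ≤ 2 ^ N := one_le_pow₀ (by norm_num)
  have hCc : 2 * kap N ≤ Cc N := by unfold Cc; nlinarith
  unfold Dk theta
  split_ifs with h
  · have hs : 0 < t - τ := by linarith
    rcases min_choice (1:ℝ) (Lam N ((t + 1) / (t - τ)) (‖y‖ / (t + 1)) - 1) with hm | hm
    · rw [hm, mul_one]
      calc _ ≤ ∫⁻ x, (ENNReal.ofReal (Pt N (t - τ) (x - y)) + ENNReal.ofReal (Pt N (t + 1) x)) := by
            apply lintegral_mono
            intro x
            have hsp := Pt_pos N hs (x - y)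
            have hrp := Pt_pos N (show 0 < t + 1 by linarith) x
            simp only
            rw [← ENNReal.ofReal_add hsp.le hrp.le, Real.enorm_eq_ofReal_abs]
            apply ENNReal.ofReal_le_ofReal
            rw [abs_le]; constructor <;> linarith
        _ = ENNReal.ofReal (kap N) + ENNReal.ofReal (kap N) := by
            rw [lintegral_add_right _ ((continuous_Pt N _).measurable.ennreal_ofReal), lintegral_Pt_sub N hs, hr]
        _ ≤ _ := by
            rw [← ENNReal.ofReal_add hk.le hk.le]
            apply ENNReal.ofReal_le_ofReal; linarith
    · rw [hm]
      have h1 : 1 ≤ (t + 1) / (t - τ) := by rw [le_div_iff₀ (by linarith)]; linarith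
      have h := Lam_ge_one N (b := ‖y‖ / (t + 1)) h1 (by positivity)
      calc _ ≤ ∫⁻ x, ENNReal.ofReal (Lam N ((t + 1) / (t - τ)) (‖y‖ / (t + 1)) - 1) * ENNReal.ofReal (Pt N (t + 1) x) := by
            apply lintegral_mono
            intro x
            simp only
            rw [Real.enorm_eq_ofReal_abs, ← ENNReal.ofReal_mul (by linarith)]
            exact ENNReal.ofReal_le_ofReal (Pt_compare N hs (by linarith) x y)
        _ = ENNReal.ofReal ((Lam N ((t + 1) / (t - τ)) (‖y‖ / (t + 1)) - 1) * kap N) := by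
            rw [lintegral_const_mul' _ _ ENNReal.ofReal_ne_top, hr, ENNReal.ofReal_mul (by linarith)]
        _ ≤ _ := by
            apply ENNReal.ofReal_le_ofReal
            rw [mul_comm]
            apply mul_le_mul_of_nonneg_right _ (by linarith)
            linarith
  · calc _ = ∫⁻ x, ENNReal.ofReal (Pt N (t + 1) x) := by
          congr 1; ext x
          have hrp := Pt_pos N (show 0 < t + 1 by linarith) x
          rw [Real.enorm_eq_ofReal_abs, zero_sub, abs_neg, abs_of_pos hrp]
      _ ≤ _ := by rw [hr]; apply ENNReal.ofReal_le_ofReal; linarith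

theorem asym {N : ℕ} {Ω : Type} [MeasurableSpace Ω] (μ : Measure Ω) [SFinite μ] (f : Ω → ℝ)
    (hf : Integrable f μ) (τ : Ω → ℝ) (y : Ω → Eu N) (hτm : Measurable τ) (hy : Measurable y)
    (hτ : ∀ᵐ ω ∂μ, 0 ≤ τ ω) :
    ∃ ε : ℝ → ℝ≥0∞, Tendsto ε atTop (nhds 0) ∧ ∀ t, 0 < t →
      (∀ x, ‖∫ ω, Dk N t (τ ω) (y ω) x * f ω ∂μ‖ₑ ≤ ε t * ENNReal.ofReal (t ^ (-(N:ℝ)))) ∧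
      ∫⁻ x, ‖∫ ω, Dk N t (τ ω) (y ω) x * f ω ∂μ‖ₑ ≤ ε t := by
  have hty : Measurable (fun ω => (τ ω, y ω)) := hτm.prodMk hy
  obtain ⟨f', hf'm, hff'⟩ := hf.1
  have hf'I : Integrable f' μ := hf.congr hff'
  have hrw : ∀ t x, ∫ ω, Dk N t (τ ω) (y ω) x * f ω ∂μ = ∫ ω, Dk N t (τ ω) (y ω) x * f' ω ∂μ := by
    intro t x
    apply integral_congr_ae
    filter_upwards [hff'] with ω h
    rw [h]
  simp only [hrw]
  refine ⟨fun t => ∫⁻ ω, ENNReal.ofReal (theta N t (τ ω) (y ω)) * ‖f' ω‖ₑ ∂μ, ?_, ?_⟩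
  · have : (0:ℝ≥0∞) = ∫⁻ ω, 0 ∂μ := by simp
    rw [this]
    refine tendsto_lintegral_filter_of_dominated_convergence
      (fun ω => ENNReal.ofReal (Cc N) * ‖f' ω‖ₑ) ?_ ?_ ?_ ?_
    · exact Eventually.of_forall fun t =>
        (((measurable_theta N t).comp hty).ennreal_ofReal).mul hf'm.measurable.enorm
    · refine Eventually.of_forall fun t => Eventually.of_forall fun ω => ?_
      gcongr
      exact theta_le N t _ _
    · rw [lintegral_const_mul' _ _ ENNReal.ofReal_ne_top]
      exact ENNReal.mul_ne_top ENNReal.ofReal_ne_top hf'I.2.ne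
    · refine Eventually.of_forall fun ω => ?_
      have h := ENNReal.tendsto_ofReal (theta_tendsto N (τ ω) (y ω))
      have := ENNReal.Tendsto.mul_const (b := ‖f' ω‖ₑ) h (Or.inr enorm_ne_top)
      simpa using this
  · intro t ht
    have hD : Measurable (fun q : Ω × Eu N => Dk N t (τ q.1) (y q.1) q.2) :=
      (measurable_Dk N t).comp (f := fun q : Ω × Eu N => ((τ q.1, y q.1), q.2)) (by fun_prop)
    constructor
    · intro x
      refine (enorm_integral_le_lintegral_enorm _).trans ?_
      rw [← lintegral_mul_const' _ _ ENNReal.ofReal_ne_top]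
      apply lintegral_mono_ae
      filter_upwards [hτ] with ω hω
      rw [enorm_mul, mul_right_comm]
      gcongr
      rw [← ENNReal.ofReal_mul (theta_nonneg N ht hω _), Real.enorm_eq_ofReal_abs]
      exact ENNReal.ofReal_le_ofReal (Dk_sup N ht hω _ _)
    · calc _ ≤ ∫⁻ x, ∫⁻ ω, ‖Dk N t (τ ω) (y ω) x * f' ω‖ₑ ∂μ := by
            exact lintegral_mono fun x => enorm_integral_le_lintegral_enorm _
        _ = ∫⁻ ω, ∫⁻ x, ‖Dk N t (τ ω) (y ω) x * f' ω‖ₑ ∂volume ∂μ := by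
            rw [lintegral_lintegral_swap]
            refine Measurable.aemeasurable ?_
            refine Measurable.enorm (Measurable.mul ?_ ?_)
            · exact hD.comp measurable_swap
            · exact hf'm.measurable.comp measurable_snd
        _ ≤ _ := by
            apply lintegral_mono_ae
            filter_upwards [hτ] with ω hω
            simp only [enorm_mul]
            rw [lintegral_mul_const' _ _ enorm_ne_top]
            gcongr
            exact Dk_int N ht hω _

theorem conv_continuousAt {N : ℕ} (f : Eu N → ℝ) (hf : Integrable f) (q : ℝ × Eu N) (hq : 0 < q.1) :
    ContinuousAt (fun q : ℝ × Eu N => ∫ y, Pt N q.1 (q.2 - y) * f y) q := by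
  have hev : ∀ᶠ r : ℝ × Eu N in nhds q, q.1 / 2 < r.1 := by
    have : ContinuousAt (fun r : ℝ × Eu N => r.1) q := continuousAt_fst
    exact this.eventually (lt_mem_nhds (by linarith))
  have hc := cN_pos N
  refine continuousAt_of_dominated (bound := fun y => cN N * (q.1 / 2) ^ (-(N:ℝ)) * ‖f y‖) ?_ ?_ ?_ ?_
  · refine Eventually.of_forall fun r => ?_
    refine AEStronglyMeasurable.mul ?_ hf.1
    exact (((continuous_Pt N r.1).comp (by fun_prop : Continuous fun y : Eu N => r.2 - y))).aestronglyMeasurable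
  · filter_upwards [hev] with r hr
    refine Eventually.of_forall fun y => ?_
    have hr0 : 0 < r.1 := by linarith
    rw [norm_mul, Real.norm_of_nonneg (Pt_pos N hr0 _).le]
    refine mul_le_mul_of_nonneg_right ((Pt_le N hr0 _).trans ?_) (norm_nonneg _)
    refine mul_le_mul_of_nonneg_left ?_ hc.le
    exact Real.rpow_le_rpow_of_nonpos (by linarith) hr.le (by simp)
  · exact hf.norm.const_mul _
  · refine Eventually.of_forall fun y => ?_
    refine ContinuousAt.mul ?_ continuousAt_const
    exact ContinuousAt.comp (f := fun r : ℝ × Eu N => (r.1, r.2 - y))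
      (continuousAt_Pt N (q.1, q.2 - y) hq) (by fun_prop)

theorem conv_continuous {N : ℕ} (f : Eu N → ℝ) (hf : Integrable f) {s : ℝ} (hs : 0 < s) :
    Continuous (fun x => ∫ y, Pt N s (x - y) * f y) := by
  rw [continuous_iff_continuousAt]
  intro x
  exact ContinuousAt.comp (f := fun x : Eu N => (s, x)) (conv_continuousAt f hf (s, x) hs) (by fun_prop)

theorem conv_integrable {N : ℕ} (f : Eu N → ℝ) (hf : Integrable f) {s : ℝ} (hs : 0 < s) (x : Eu N) :
    Integrable (fun y => Pt N s (x - y) * f y) := by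
  refine hf.bdd_mul (c := cN N * s ^ (-(N:ℝ))) ?_ ?_
  · exact (((continuous_Pt N s).comp (by fun_prop : Continuous fun y : Eu N => x - y))).aestronglyMeasurable
  · refine Eventually.of_forall fun y => ?_
    rw [Real.norm_of_nonneg (Pt_pos N hs _).le]
    exact Pt_le N hs _

/-- the inner convolution in the Duhamel term -/
noncomputable def hh (N : ℕ) (g : ℝ → Eu N → ℝ) (t τ : ℝ) (x : Eu N) : ℝ :=
  ∫ y, Pt N (t - τ) (x - y) * g τ y

theorem hh_nonneg {N : ℕ} {g : ℝ → Eu N → ℝ} (hg0 : ∀ τ y, 0 ≤ g τ y) {t τ : ℝ} (h : τ < t) (x : Eu N) :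
    0 ≤ hh N g t τ x :=
  integral_nonneg fun y => mul_nonneg (Pt_pos N (by linarith) _).le (hg0 _ _)

theorem hh_le {N : ℕ} {g : ℝ → Eu N → ℝ} (hg0 : ∀ τ y, 0 ≤ g τ y) {t τ B : ℝ} (h : τ < t)
    (hB : ∀ᵐ y, g τ y ≤ B) (x : Eu N) :
    hh N g t τ x ≤ kap N * B := by
  unfold hh
  have hs : 0 < t - τ := by linarith
  have h1 : ∫ y, Pt N (t - τ) (x - y) * B = kap N * B := by
    rw [integral_mul_const, integral_sub_left_eq_self (fun z => Pt N (t - τ) z), integral_Pt N hs]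
  rw [← h1]
  refine integral_mono_of_nonneg ?_ ?_ ?_
  · exact Eventually.of_forall fun y => mul_nonneg (Pt_pos N hs _).le (hg0 _ _)
  · exact ((integrable_Pt N hs).comp_sub_left x).mul_const B
  · filter_upwards [hB] with y hy
    exact mul_le_mul_of_nonneg_left hy (Pt_pos N hs _).le

theorem hh_eq_zero_iff {N : ℕ} {g : ℝ → Eu N → ℝ} (hg0 : ∀ τ y, 0 ≤ g τ y) {t τ : ℝ} (h : τ < t)
    (hgi : Integrable (g τ)) (x : Eu N) : hh N g t τ x = 0 ↔ g τ =ᵐ[volume] 0 := by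
  unfold hh
  have hs : 0 < t - τ := by linarith
  rw [integral_eq_zero_iff_of_nonneg (fun y => mul_nonneg (Pt_pos N hs _).le (hg0 _ _))
    (conv_integrable _ hgi hs x)]
  constructor
  · intro h
    filter_upwards [h] with y hy
    simpa [(Pt_pos N hs (x - y)).ne'] using hy
  · intro h
    filter_upwards [h] with y hy
    simp [hy]

theorem dicho {N : ℕ} {g : ℝ → Eu N → ℝ} (hg0 : ∀ τ y, 0 ≤ g τ y)
    (hgi : ∀ τ, 0 < τ → Integrable (g τ)) {B : ℝ} (hB : ∀ τ, 0 < τ → ∀ᵐ y, g τ y ≤ B)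
    {t : ℝ} (ht : 0 < t) (w : Eu N → ℝ) (hw : Continuous w)
    (hae : ∀ᵐ x, w x = ∫ τ in (0:ℝ)..t, hh N g t τ x) :
    (∀ x, AEStronglyMeasurable (fun τ => hh N g t τ x) (volume.restrict (Set.Ioo 0 t))) ∨
      ∀ x, w x = 0 := by
  set ρ : Measure ℝ := volume.restrict (Set.Ioo 0 t) with hρ
  have hmem : ∀ᵐ τ ∂ρ, τ ∈ Set.Ioo 0 t := ae_restrict_mem measurableSet_Ioo
  have hae' : ∀ᵐ x, w x = ∫ τ, hh N g t τ x ∂ρ := by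
    filter_upwards [hae] with x hx
    rw [hx, intervalIntegral.integral_of_le ht.le, integral_Ioc_eq_integral_Ioo]
  by_cases hall : ∀ x, AEStronglyMeasurable (fun τ => hh N g t τ x) ρ
  · exact Or.inl hall
  right
  push Not at hall
  obtain ⟨x0, hx0⟩ := hall
  have hcont : ∀ τ ∈ Set.Ioo 0 t, Continuous (hh N g t τ) := fun τ hτ =>
    conv_continuous _ (hgi τ hτ.1) (by linarith [hτ.2])
  set Ac : Set (Eu N) := {x | AEStronglyMeasurable (fun τ => hh N g t τ x) ρ} with hAc
  have hclosed : IsClosed Ac := by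
    apply IsSeqClosed.isClosed
    intro u x hu hux
    refine aestronglyMeasurable_of_tendsto_ae atTop hu ?_
    filter_upwards [hmem] with τ hτ
    exact ((hcont τ hτ).tendsto x).comp hux
  have hF0 : ∀ x, x ∉ Ac → ∫ τ, hh N g t τ x ∂ρ = 0 := fun x hx =>
    integral_non_aestronglyMeasurable hx
  have hbd : ∀ x, ∀ᵐ τ ∂ρ, ‖hh N g t τ x‖ ≤ kap N * B := by
    intro x
    filter_upwards [hmem] with τ hτ
    rw [Real.norm_of_nonneg (hh_nonneg hg0 hτ.2 x)]
    exact hh_le hg0 hτ.2 (hB τ hτ.1) x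
  have hfin : IsFiniteMeasure ρ := by rw [hρ]; infer_instance
  have hzero_open : ∀ O : Set (Eu N), IsOpen O → (∀ᵐ x, x ∈ O → w x = 0) → ∀ x ∈ O, w x = 0 := by
    intro O hO h
    have : w =ᵐ[volume.restrict O] (fun _ => 0) := by
      rw [EventuallyEq, ae_restrict_iff' hO.measurableSet]; exact h
    exact Measure.eqOn_open_of_ae_eq this hO hw.continuousOn continuousOn_const
  have hA0 : ∀ x, x ∉ Ac → w x = 0 := by
    apply hzero_open Acᶜ hclosed.isOpen_compl
    filter_upwards [hae'] with x hx hxA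
    rw [hx, hF0 x hxA]
  have hclopen : IsClopen {x | w x = 0} := by
    refine ⟨isClosed_eq hw continuous_const, ?_⟩
    rw [isOpen_iff_mem_nhds]
    intro x hx
    by_cases hxA : x ∈ Ac
    · -- positivity
      have hintg : Integrable (fun τ => hh N g t τ x) ρ :=
        Integrable.of_bound hxA _ (hbd x)
      have hFpos : 0 < ∫ τ, hh N g t τ x ∂ρ := by
        have hnn : 0 ≤ᵐ[ρ] fun τ => hh N g t τ x := by
          filter_upwards [hmem] with τ hτ using hh_nonneg hg0 hτ.2 x
        refine lt_of_le_of_ne (integral_nonneg_of_ae hnn) ?_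
        intro h0
        have h1 := (integral_eq_zero_iff_of_nonneg_ae hnn hintg).1 h0.symm
        apply hx0
        refine (aestronglyMeasurable_const (b := (0:ℝ))).congr ?_
        filter_upwards [h1, hmem] with τ h2 hτ
        have h3 := (hh_eq_zero_iff hg0 hτ.2 (hgi τ hτ.1) x).1 h2
        exact ((hh_eq_zero_iff hg0 hτ.2 (hgi τ hτ.1) x0).2 h3).symm
      set F : Eu N → ℝ := fun x => ∫ τ, hh N g t τ x ∂ρ with hFdef
      have hFc : ContinuousWithinAt F Ac x := by
        refine continuousWithinAt_of_dominated (bound := fun _ => kap N * B) ?_ ?_ ?_ ?_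
        · filter_upwards [self_mem_nhdsWithin] with z hz using hz
        · exact Eventually.of_forall hbd
        · exact integrable_const _
        · filter_upwards [hmem] with τ hτ using (hcont τ hτ).continuousWithinAt
      have e1 : ∀ᶠ z in nhds x, z ∈ Ac → F x / 2 < F z := by
        have := hFc.eventually (lt_mem_nhds (show F x / 2 < F x by
          have : 0 < F x := hFpos
          linarith))
        exact eventually_nhdsWithin_iff.1 this
      have e2 : ∀ᶠ z in nhds x, w z < F x / 2 := by
        refine hw.continuousAt.eventually (gt_mem_nhds ?_)
        have : 0 < F x := hFpos
        have hx' : w x = 0 := hx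
        linarith
      obtain ⟨O, hO, hOo, hxO⟩ := eventually_nhds_iff.1 (e1.and e2)
      refine mem_nhds_iff.2 ⟨O, ?_, hOo, hxO⟩
      apply hzero_open O hOo
      filter_upwards [hae'] with z hz hzO
      obtain ⟨h1, h2⟩ := hO z hzO
      by_cases hzA : z ∈ Ac
      · have := h1 hzA
        have hz' : w z = F z := hz
        linarith
      · exact hA0 z hzA
    · exact mem_nhds_iff.2 ⟨Acᶜ, hA0, hclosed.isOpen_compl, hxA⟩
  have huniv : {x | w x = 0} = Set.univ := hclopen.eq_univ ⟨x0, hA0 x0 hx0⟩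
  intro x
  have : x ∈ {x | w x = 0} := by rw [huniv]; trivial
  exact this

theorem approx_id {N : ℕ} (ψ : BoundedContinuousFunction (Eu N) NNReal) (ε : ℕ → ℝ)
    (hε : ∀ n, 0 < ε n) (hε0 : Tendsto ε atTop (nhds 0)) (y : Eu N) :
    Tendsto (fun n => ∫ x, Pt N (ε n) (x - y) * (ψ x : ℝ)) atTop (nhds (kap N * (ψ y : ℝ))) := by
  have h1 : ∀ n, ∫ x, Pt N (ε n) (x - y) * (ψ x : ℝ) = ∫ z, P N z * (ψ (y + ε n • z) : ℝ) :=
    fun n => integral_Pt_mul N (hε n) y _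
  simp only [h1]
  have h2 : kap N * (ψ y : ℝ) = ∫ z, P N z * (ψ y : ℝ) := by
    rw [integral_mul_const]; rfl
  rw [h2]
  obtain ⟨C, hC⟩ : ∃ C : NNReal, ∀ x, ψ x ≤ C := ⟨_, fun x => ψ.apply_le_nndist_zero x⟩
  refine tendsto_integral_of_dominated_convergence (fun z => P N z * C) ?_ ?_ ?_ ?_
  · intro n
    have hψ := ψ.continuous
    have hP := continuous_P N
    exact Continuous.aestronglyMeasurable (by fun_prop)
  · exact (integrable_P N).mul_const _
  · intro n
    refine Eventually.of_forall fun z => ?_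
    rw [Real.norm_of_nonneg (mul_nonneg (P_pos N z).le (NNReal.coe_nonneg _))]
    exact mul_le_mul_of_nonneg_left (by exact_mod_cast hC _) (P_pos N z).le
  · refine Eventually.of_forall fun z => ?_
    refine tendsto_const_nhds.mul ?_
    have hψ : Continuous (fun x => (ψ x : ℝ)) := by have := ψ.continuous; fun_prop
    refine (hψ.tendsto y).comp ?_
    have : Tendsto (fun n => y + ε n • z) atTop (nhds (y + (0:ℝ) • z)) :=
      tendsto_const_nhds.add (hε0.smul_const z)
    simpa using this

theorem weak_lim {N : ℕ} (f : Eu N → ℝ) (hf0 : ∀ y, 0 ≤ f y) (hfm : Measurable f) (hfi : Integrable f)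
    (ψ : BoundedContinuousFunction (Eu N) NNReal) (ε : ℕ → ℝ)
    (hε : ∀ n, 0 < ε n) (hε0 : Tendsto ε atTop (nhds 0)) :
    Tendsto (fun n => ∫⁻ x, (ψ x : ℝ≥0∞) * ENNReal.ofReal (∫ y, Pt N (ε n) (x - y) * f y)) atTop
      (nhds (ENNReal.ofReal (kap N) * ∫⁻ y, (ψ y : ℝ≥0∞) * ENNReal.ofReal (f y))) := by
  obtain ⟨C, hC⟩ : ∃ C : NNReal, ∀ x, ψ x ≤ C := ⟨_, fun x => ψ.apply_le_nndist_zero x⟩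
  have hψ : Continuous (fun x => (ψ x : ℝ)) := by have := ψ.continuous; fun_prop
  have hintg : ∀ n y, Integrable (fun x => Pt N (ε n) (x - y) * (ψ x : ℝ)) := by
    intro n y
    refine Integrable.mul_bdd (c := C) ?_ hψ.aestronglyMeasurable ?_
    · exact (integrable_Pt N (hε n)).comp_sub_right y
    · refine Eventually.of_forall fun x => ?_
      rw [Real.norm_of_nonneg (NNReal.coe_nonneg _)]; exact_mod_cast hC x
  have hmeasPt : ∀ n, Measurable (fun q : Eu N × Eu N => Pt N (ε n) (q.1 - q.2)) := fun n =>
    ((continuous_Pt N (ε n)).comp (by fun_prop)).measurable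
  have h1 : ∀ n, ∫⁻ x, (ψ x : ℝ≥0∞) * ENNReal.ofReal (∫ y, Pt N (ε n) (x - y) * f y) =
      ∫⁻ y, ENNReal.ofReal (f y) * ENNReal.ofReal (∫ x, Pt N (ε n) (x - y) * (ψ x : ℝ)) := by
    intro n
    calc _ = ∫⁻ x, ∫⁻ y, ENNReal.ofReal (Pt N (ε n) (x - y)) * ENNReal.ofReal (f y) * (ψ x : ℝ≥0∞) := by
          congr 1; ext x
          rw [ofReal_integral_eq_lintegral_ofReal (conv_integrable f hfi (hε n) x)
            (Eventually.of_forall fun y => mul_nonneg (Pt_pos N (hε n) _).le (hf0 y)), mul_comm,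
            ← lintegral_mul_const' _ _ ENNReal.coe_ne_top]
          congr 1; ext y
          rw [ENNReal.ofReal_mul (Pt_pos N (hε n) _).le]
      _ = ∫⁻ y, ∫⁻ x, ENNReal.ofReal (Pt N (ε n) (x - y)) * ENNReal.ofReal (f y) * (ψ x : ℝ≥0∞) := by
          rw [lintegral_lintegral_swap]
          refine Measurable.aemeasurable ?_
          refine ((hmeasPt n).ennreal_ofReal.mul (hfm.comp measurable_snd).ennreal_ofReal).mul ?_
          exact (ψ.continuous.measurable.comp measurable_fst).coe_nnreal_ennreal
      _ = _ := by
          congr 1; ext y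
          rw [ofReal_integral_eq_lintegral_ofReal (hintg n y)
            (Eventually.of_forall fun x => mul_nonneg (Pt_pos N (hε n) _).le (NNReal.coe_nonneg _)),
            ← lintegral_const_mul' _ _ ENNReal.ofReal_ne_top]
          congr 1; ext x
          rw [ENNReal.ofReal_mul (Pt_pos N (hε n) _).le, ENNReal.ofReal_coe_nnreal]
          ring
  simp only [h1]
  have h2 : ENNReal.ofReal (kap N) * ∫⁻ y, (ψ y : ℝ≥0∞) * ENNReal.ofReal (f y) =
      ∫⁻ y, ENNReal.ofReal (f y) * ENNReal.ofReal (kap N * (ψ y : ℝ)) := by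
    rw [← lintegral_const_mul' _ _ ENNReal.ofReal_ne_top]
    congr 1; ext y
    rw [ENNReal.ofReal_mul (kap_pos N).le, ENNReal.ofReal_coe_nnreal]; ring
  rw [h2]
  refine tendsto_lintegral_of_dominated_convergence
    (fun y => ENNReal.ofReal (f y) * ENNReal.ofReal (kap N * C)) ?_ ?_ ?_ ?_
  · intro n
    refine hfm.ennreal_ofReal.mul (Measurable.ennreal_ofReal ?_)
    refine StronglyMeasurable.measurable ?_
    refine StronglyMeasurable.integral_prod_right' (f := fun q : Eu N × Eu N => Pt N (ε n) (q.2 - q.1) * (ψ q.2 : ℝ)) ?_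
    refine Measurable.stronglyMeasurable ?_
    exact ((hmeasPt n).comp measurable_swap).mul (hψ.measurable.comp measurable_snd)
  · intro n
    refine Eventually.of_forall fun y => ?_
    refine mul_le_mul_right (ENNReal.ofReal_le_ofReal ?_) _
    have h3 : ∫ x, Pt N (ε n) (x - y) * (C:ℝ) = kap N * C := by
      rw [integral_mul_const, integral_sub_right_eq_self (fun z => Pt N (ε n) z), integral_Pt N (hε n)]
    rw [← h3]
    refine integral_mono (hintg n y) (((integrable_Pt N (hε n)).comp_sub_right y).mul_const _) ?_
    intro x
    exact mul_le_mul_of_nonneg_left (by exact_mod_cast hC _) (Pt_pos N (hε n) _).le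
  · rw [lintegral_mul_const' _ _ ENNReal.ofReal_ne_top]
    refine ENNReal.mul_ne_top ?_ ENNReal.ofReal_ne_top
    rw [← ofReal_integral_eq_lintegral_ofReal hfi (Eventually.of_forall hf0)]
    exact ENNReal.ofReal_ne_top
  · refine Eventually.of_forall fun y => ?_
    exact ENNReal.Tendsto.const_mul (ENNReal.tendsto_ofReal (approx_id ψ ε hε hε0 y)) (Or.inr ENNReal.ofReal_ne_top)

/-- goodness of a time: the Duhamel integrand is measurable in time -/
def good (N : ℕ) (g : ℝ → Eu N → ℝ) (t : ℝ) : Prop :=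
  ∀ x, AEStronglyMeasurable (fun τ => hh N g t τ x) (volume.restrict (Set.Ioo 0 t))

/-- for a good time, off a null set the integrand is jointly measurable -/
theorem good_joint {N : ℕ} {g : ℝ → Eu N → ℝ} (hgi : ∀ τ, 0 < τ → Integrable (g τ)) {t : ℝ}
    (hgood : good N g t) :
    ∃ Z : Set ℝ, MeasurableSet Z ∧ volume Z = 0 ∧ ∀ Z' : Set ℝ, MeasurableSet Z' → Z ⊆ Z' →
      Measurable (fun q : ℝ × Eu N => (Set.Ioo 0 t \ Z').indicator (fun τ => hh N g t τ q.2) q.1) := by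
  set X : ℕ → Eu N := TopologicalSpace.denseSeq (Eu N) with hX
  have hXd : DenseRange X := TopologicalSpace.denseRange_denseSeq _
  have hj : ∀ j, ∃ m : ℝ → ℝ, Measurable m ∧ ∀ᵐ τ ∂(volume.restrict (Set.Ioo 0 t)), hh N g t τ (X j) = m τ := by
    intro j
    obtain ⟨m, hm, hme⟩ := hgood (X j)
    exact ⟨m, hm.measurable, hme⟩
  choose m hm hme using hj
  have hall : ∀ᵐ τ ∂volume, ∀ j, τ ∈ Set.Ioo 0 t → hh N g t τ (X j) = m j τ := by
    rw [ae_all_iff]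
    intro j
    exact (ae_restrict_iff' measurableSet_Ioo).1 (hme j)
  refine ⟨toMeasurable volume {τ | ¬ ∀ j, τ ∈ Set.Ioo 0 t → hh N g t τ (X j) = m j τ},
    measurableSet_toMeasurable _ _, ?_, ?_⟩
  · rw [measure_toMeasurable]; exact hall
  · intro Z' hZ'm hZ'
    have hZsub : ∀ τ, τ ∉ Z' → ∀ j, τ ∈ Set.Ioo 0 t → hh N g t τ (X j) = m j τ := by
      intro τ hτ
      by_contra hcon
      exact hτ (hZ' (subset_toMeasurable _ _ hcon))
    have hRm : MeasurableSet (Set.Ioo 0 t \ Z') := measurableSet_Ioo.diff hZ'm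
    set u : Eu N → ℝ → ℝ := fun x τ => (Set.Ioo 0 t \ Z').indicator (fun τ => hh N g t τ x) τ with hu
    have hucont : ∀ τ, Continuous (fun x => u x τ) := by
      intro τ
      by_cases hτ : τ ∈ Set.Ioo 0 t \ Z'
      · simp only [hu, Set.indicator_of_mem hτ]
        exact conv_continuous _ (hgi τ hτ.1.1) (by linarith [hτ.1.2])
      · simp only [hu, Set.indicator_of_notMem hτ]
        exact continuous_const
    have huX : ∀ j, Measurable (u (X j)) := by
      intro j
      have : u (X j) = (Set.Ioo 0 t \ Z').indicator (m j) := by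
        ext τ
        by_cases hτ : τ ∈ Set.Ioo 0 t \ Z'
        · simp only [hu, Set.indicator_of_mem hτ]
          exact hZsub τ hτ.2 j hτ.1
        · simp only [hu, Set.indicator_of_notMem hτ]
      rw [this]
      exact (hm j).indicator hRm
    have hux : ∀ x, Measurable (u x) := by
      intro x
      obtain ⟨s, hs, hsx⟩ := mem_closure_iff_seq_limit.1 (hXd x)
      refine measurable_of_tendsto_metrizable (f := fun n => u (s n)) ?_ ?_
      · intro n
        obtain ⟨j, hj⟩ := hs n
        rw [← hj]; exact huX j
      · rw [tendsto_pi_nhds]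
        intro τ
        exact ((hucont τ).tendsto x).comp hsx
    have := stronglyMeasurable_uncurry_of_continuous_of_stronglyMeasurable hucont
      (fun x => (hux x).stronglyMeasurable)
    exact this.measurable.comp measurable_swap

theorem exists_Z {N : ℕ} {g G : ℝ → Eu N → ℝ} (hg0 : ∀ τ y, 0 ≤ g τ y) (hgm : ∀ τ, Measurable (g τ))
    (hgi : ∀ τ, 0 < τ → Integrable (g τ))
    (hG : Measurable (fun q : ℝ × Eu N => G q.1 q.2))
    (hd : ∀ t, 0 < t → good N g t ∨ g t = G t) :
    ∃ Z : Set ℝ, MeasurableSet Z ∧ volume Z = 0 ∧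
      ∀ ψ : BoundedContinuousFunction (Eu N) NNReal,
        Measurable ((Set.Ioi 0 \ Z).indicator
          (fun τ => ∫⁻ y, (ψ y : ℝ≥0∞) * ENNReal.ofReal (g τ y))) := by
  classical
  set S : Set ℝ := {t | good N g t} with hS
  set K := closure S with hK
  obtain ⟨Q, hQS, hQc, hSQ⟩ := (TopologicalSpace.IsSeparable.of_separableSpace S).exists_countable_dense_subset
  have h0S : (0 : ℝ) ∈ S := by
    intro x
    simp
  have hQne : Q.Nonempty := by
    rcases Set.eq_empty_or_nonempty Q with h | h
    · rw [h] at hSQ; simp at hSQ; rw [hSQ] at h0S; exact absurd h0S (Set.notMem_empty _)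
    · exact h
  obtain ⟨q, hq⟩ := hQc.exists_eq_range hQne
  have hqg : ∀ i, good N g (q i) := fun i => hQS (hq ▸ Set.mem_range_self i)
  choose Zi hZim hZi0 hZi using fun i => good_joint hgi (hqg i)
  set C : Set ℝ := {x ∈ K | nhdsWithin x (K ∩ Set.Ioi x) = ⊥} with hC
  have hCc : C.Countable := countable_setOfPred_isolated_right_within
  set Z : Set ℝ := (⋃ i, Zi i) ∪ C with hZ
  have hZm : MeasurableSet Z := (MeasurableSet.iUnion hZim).union hCc.measurableSet
  have hZ0 : volume Z = 0 := measure_union_null (measure_iUnion_null hZi0) (hCc.measure_zero _)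
  refine ⟨Z, hZm, hZ0, fun ψ => ?_⟩
  have hψm : Measurable (fun x => (ψ x : ℝ≥0∞)) := by
    have := ψ.continuous.measurable
    fun_prop
  have hKm : MeasurableSet K := isClosed_closure.measurableSet
  set D : Set ℝ := (Set.Ioi 0 \ Z) ∩ K with hD
  have hDm : MeasurableSet D := (measurableSet_Ioi.diff hZm).inter hKm
  have hKQ : K ⊆ closure Q := closure_minimal hSQ isClosed_closure
  have hex : ∀ τ ∈ D, ∀ ε : ℝ, 0 < ε → ∃ i, q i ∈ Set.Ioo τ (τ + ε) := by
    intro τ hτ ε hε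
    have hn : τ ∉ C := fun h => hτ.1.2 (Or.inr h)
    have hne : (nhdsWithin τ (K ∩ Set.Ioi τ)).NeBot := ⟨fun h => hn ⟨hτ.2, h⟩⟩
    obtain ⟨z, hz1, hz2⟩ := _root_.mem_closure_iff.1 (mem_closure_iff_nhdsWithin_neBot.2 hne)
      (Set.Ioo (τ - ε) (τ + ε)) isOpen_Ioo ⟨by linarith, by linarith⟩
    obtain ⟨w, hw1, hw2⟩ := _root_.mem_closure_iff.1 (hKQ hz2.1) (Set.Ioo τ (τ + ε)) isOpen_Ioo ⟨hz2.2, hz1.2⟩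
    rw [hq] at hw2
    obtain ⟨i, rfl⟩ := hw2
    exact ⟨i, hw1⟩
  -- approximants
  set F : ℕ → ℝ → ℝ≥0∞ := fun i τ => ∫⁻ x, (ψ x : ℝ≥0∞) * ENNReal.ofReal
    ((Set.Ioo 0 (q i) \ Z).indicator (fun τ => hh N g (q i) τ x) τ) with hF
  have hFm : ∀ i, Measurable (F i) := by
    intro i
    have h1 := hZi i Z hZm ((Set.subset_iUnion Zi i).trans Set.subset_union_left)
    exact Measurable.lintegral_prod_right' (f := fun q' : ℝ × Eu N => (ψ q'.2 : ℝ≥0∞) * ENNReal.ofReal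
      ((Set.Ioo 0 (q i) \ Z).indicator (fun τ => hh N g (q i) τ q'.2) q'.1))
      ((hψm.comp measurable_snd).mul h1.ennreal_ofReal)
  set pp : ℕ → ℕ → ℝ → Prop := fun n i τ => q i ∈ Set.Ioo τ (τ + 1 / ((n : ℝ) + 1)) ∨ τ ∉ D with hpp
  have hpm : ∀ n i, MeasurableSet {τ | pp n i τ} := by
    intro n i
    have h1 : MeasurableSet {τ : ℝ | q i ∈ Set.Ioo τ (τ + 1 / ((n : ℝ) + 1))} := by
      have : {τ : ℝ | q i ∈ Set.Ioo τ (τ + 1 / ((n : ℝ) + 1))} = Set.Ioo (q i - 1 / ((n : ℝ) + 1)) (q i) := by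
        ext τ; simp only [Set.mem_ofPred_eq, Set.mem_Ioo]
        constructor <;> rintro ⟨a, b⟩ <;> constructor <;> linarith
      rw [this]; exact measurableSet_Ioo
    exact h1.union hDm.compl
  have hpe : ∀ n τ, ∃ i, pp n i τ := by
    intro n τ
    by_cases h : τ ∈ D
    · obtain ⟨i, hi⟩ := hex τ h (1 / ((n : ℝ) + 1)) (by positivity)
      exact ⟨i, Or.inl hi⟩
    · exact ⟨0, Or.inr h⟩
  have hAm : ∀ n, Measurable (fun τ => F (Nat.find (hpe n τ)) τ) := fun n =>
    Measurable.find hFm (hpm n) (hpe n)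
  have hlim : Measurable (D.indicator (fun τ => ENNReal.ofReal (kap N) *
      ∫⁻ y, (ψ y : ℝ≥0∞) * ENNReal.ofReal (g τ y))) := by
    refine measurable_of_tendsto_metrizable (f := fun n => D.indicator (fun τ => F (Nat.find (hpe n τ)) τ))
      (fun n => (hAm n).indicator hDm) ?_
    rw [tendsto_pi_nhds]
    intro τ
    by_cases hτ : τ ∈ D
    · simp only [Set.indicator_of_mem hτ]
      have hs : ∀ n : ℕ, q (Nat.find (hpe n τ)) ∈ Set.Ioo τ (τ + 1 / ((n : ℝ) + 1)) := by
        intro n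
        rcases Nat.find_spec (hpe n τ) with h | h
        · exact h
        · exact absurd hτ h
      have hτ0 : 0 < τ := hτ.1.1
      have h1 := weak_lim (g τ) (hg0 τ) (hgm τ) (hgi τ hτ0) ψ
        (fun n => q (Nat.find (hpe n τ)) - τ) (fun n => by linarith [(hs n).1]) (by
          refine squeeze_zero (fun n => by linarith [(hs n).1]) (fun n => ?_)
            (tendsto_one_div_add_atTop_nhds_zero_nat (𝕜 := ℝ))
          linarith [(hs n).2])
      refine h1.congr fun n => ?_
      simp only [hF]
      refine lintegral_congr fun x => ?_
      rw [Set.indicator_of_mem]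
      · rfl
      · exact ⟨⟨hτ0, (hs n).1⟩, hτ.1.2⟩
    · simp only [Set.indicator_of_notMem hτ]; exact tendsto_const_nhds
  have hGm : Measurable (fun τ => ∫⁻ y, (ψ y : ℝ≥0∞) * ENNReal.ofReal (G τ y)) :=
    Measurable.lintegral_prod_right' (f := fun q' : ℝ × Eu N => (ψ q'.2 : ℝ≥0∞) * ENNReal.ofReal (G q'.1 q'.2))
      ((hψm.comp measurable_snd).mul hG.ennreal_ofReal)
  have heq : (Set.Ioi 0 \ Z).indicator (fun τ => ∫⁻ y, (ψ y : ℝ≥0∞) * ENNReal.ofReal (g τ y))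
      = fun τ => (ENNReal.ofReal (kap N))⁻¹ * D.indicator (fun τ => ENNReal.ofReal (kap N) *
      ∫⁻ y, (ψ y : ℝ≥0∞) * ENNReal.ofReal (g τ y)) τ
      + ((Set.Ioi 0 \ Z) \ K).indicator (fun τ => ∫⁻ y, (ψ y : ℝ≥0∞) * ENNReal.ofReal (G τ y)) τ := by
    funext τ
    by_cases h1 : τ ∈ Set.Ioi 0 \ Z
    · by_cases h2 : τ ∈ K
      · have h3 : τ ∈ D := ⟨h1, h2⟩
        have h4 : τ ∉ (Set.Ioi 0 \ Z) \ K := fun h => h.2 h2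
        rw [Set.indicator_of_mem h1, Set.indicator_of_mem h3, Set.indicator_of_notMem h4, add_zero,
          ← mul_assoc, ENNReal.inv_mul_cancel, one_mul]
        · simpa using kap_pos N
        · exact ENNReal.ofReal_ne_top
      · have h3 : τ ∉ D := fun h => h2 h.2
        have h4 : τ ∈ (Set.Ioi 0 \ Z) \ K := ⟨h1, h2⟩
        rw [Set.indicator_of_mem h1, Set.indicator_of_notMem h3, Set.indicator_of_mem h4, mul_zero, zero_add]
        rcases hd τ h1.1 with h | h
        · exact absurd (subset_closure h) h2
        · rw [h]
    · have h3 : τ ∉ D := fun h => h1 h.1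
      have h4 : τ ∉ (Set.Ioi 0 \ Z) \ K := fun h => h1 h.1
      rw [Set.indicator_of_notMem h1, Set.indicator_of_notMem h3, Set.indicator_of_notMem h4]; simp
  rw [heq]
  exact (measurable_const.mul hlim).add (hGm.indicator ((measurableSet_Ioi.diff hZm).diff hKm))

theorem exists_kernel {N : ℕ} {g G : ℝ → Eu N → ℝ} (hg0 : ∀ τ y, 0 ≤ g τ y) (hgm : ∀ τ, Measurable (g τ))
    (hgi : ∀ τ, 0 < τ → Integrable (g τ)) {A : ℝ≥0∞} (hA : A ≠ ⊤)
    (hmass : ∀ τ, 0 < τ → ∫⁻ y, ENNReal.ofReal (g τ y) ≤ A)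
    (hG : Measurable (fun q : ℝ × Eu N => G q.1 q.2))
    (hd : ∀ t, 0 < t → good N g t ∨ g t = G t) :
    ∃ κ : ProbabilityTheory.Kernel ℝ (Eu N), ProbabilityTheory.IsFiniteKernel κ ∧
      ∀ᵐ τ ∂(volume.restrict (Set.Ioi 0)), κ τ = volume.withDensity (fun y => ENNReal.ofReal (g τ y)) := by
  classical
  obtain ⟨Z, hZm, hZ0, hψ⟩ := exists_Z hg0 hgm hgi hG hd
  set m : ℝ → Measure (Eu N) := fun τ => if τ ∈ Set.Ioi 0 \ Z then
    volume.withDensity (fun y => ENNReal.ofReal (g τ y)) else 0 with hm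
  have hbd : ∀ τ, m τ Set.univ ≤ A := by
    intro τ
    simp only [hm]
    split_ifs with h
    · rw [withDensity_apply _ MeasurableSet.univ, setLIntegral_univ]; exact hmass τ h.1
    · simp
  have hfin : ∀ τ, IsFiniteMeasure (m τ) := fun τ => ⟨(hbd τ).trans_lt hA.lt_top⟩
  have hψ' : ∀ ψ : BoundedContinuousFunction (Eu N) NNReal, Measurable (fun τ => ∫⁻ x, (ψ x : ℝ≥0∞) ∂(m τ)) := by
    intro ψ
    convert hψ ψ using 2 with τ
    simp only [hm, Set.indicator]
    split_ifs with h
    · rw [lintegral_withDensity_eq_lintegral_mul]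
      · simp only [Pi.mul_apply]; refine lintegral_congr fun x => mul_comm _ _
      · exact (hgm τ).ennreal_ofReal
      · have := ψ.continuous.measurable
        fun_prop
    · simp
  have hcl : ∀ F : Set (Eu N), IsClosed F → Measurable (fun τ => m τ F) := by
    intro F hF
    refine measurable_of_tendsto_metrizable (fun n => hψ' (hF.apprSeq n)) ?_
    rw [tendsto_pi_nhds]
    intro τ
    haveI := hfin τ
    exact measure_of_cont_bdd_of_tendsto_indicator (m τ) (c := 1) hF.measurableSet _
      (fun n x => HasOuterApproxClosed.apprSeq_apply_le_one hF n x) (HasOuterApproxClosed.tendsto_apprSeq hF)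
  have hmm : Measurable m := by
    refine Measurable.measure_of_isPiSystem (S := {s | IsClosed s}) ?_ isPiSystem_isClosed ?_ ?_
    · rw [← borel_eq_generateFrom_isClosed]; exact BorelSpace.measurable_eq
    · intro F hF; exact hcl F hF
    · exact hcl _ isClosed_univ
  refine ⟨⟨m, hmm⟩, ⟨A, hA.lt_top, hbd⟩, ?_⟩
  rw [ae_restrict_iff' measurableSet_Ioi]
  have : ∀ᵐ τ ∂(volume : Measure ℝ), τ ∉ Z := by
    rw [ae_iff]; simpa using hZ0
  filter_upwards [this] with τ h1 h2
  simp only [ProbabilityTheory.Kernel.coe_mk, hm]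
  rw [if_pos ⟨h2, h1⟩]

theorem hh_dens {N : ℕ} {g : ℝ → Eu N → ℝ} (hg0 : ∀ τ y, 0 ≤ g τ y) (hgm : ∀ τ, Measurable (g τ))
    (t τ : ℝ) (x : Eu N) (m : Measure (Eu N))
    (hm : m = volume.withDensity (fun y => ENNReal.ofReal (g τ y))) :
    ∫ y, Pt N (t - τ) (x - y) ∂m = hh N g t τ x := by
  rw [hm, integral_withDensity_eq_integral_toReal_smul (hgm τ).ennreal_ofReal
    (Eventually.of_forall fun y => ENNReal.ofReal_lt_top)]
  unfold hh
  refine integral_congr_ae (Eventually.of_forall fun y => ?_)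
  simp only [smul_eq_mul]
  rw [ENNReal.toReal_ofReal (hg0 _ _), mul_comm]

theorem hh_dens' {N : ℕ} {g : ℝ → Eu N → ℝ} (hg0 : ∀ τ y, 0 ≤ g τ y) (hgm : ∀ τ, Measurable (g τ))
    {t τ : ℝ} (h : τ < t) (hgi : Integrable (g τ)) (x : Eu N) (m : Measure (Eu N))
    (hm : m = volume.withDensity (fun y => ENNReal.ofReal (g τ y))) :
    ∫⁻ y, ENNReal.ofReal (Pt N (t - τ) (x - y)) ∂m = ENNReal.ofReal (hh N g t τ x) := by
  have hs : 0 < t - τ := by linarith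
  have hPm : Measurable (fun y => ENNReal.ofReal (Pt N (t - τ) (x - y))) :=
    (((continuous_Pt N (t - τ)).comp (by fun_prop : Continuous fun y : Eu N => x - y))).measurable.ennreal_ofReal
  rw [hm, lintegral_withDensity_eq_lintegral_mul _ (hgm τ).ennreal_ofReal hPm]
  unfold hh
  rw [ofReal_integral_eq_lintegral_ofReal (conv_integrable _ hgi hs x)
    (Eventually.of_forall fun y => mul_nonneg (Pt_pos N hs _).le (hg0 _ _))]
  refine lintegral_congr fun y => ?_
  simp only [Pi.mul_apply]
  rw [ENNReal.ofReal_mul (Pt_pos N hs _).le, mul_comm]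

theorem eps_tendsto {b C : ℝ} (hb : 1 < b) :
    Tendsto (fun t : ℝ => C * (t * (1 + t / 2) ^ (-b))) atTop (nhds 0) := by
  have h1 : Tendsto (fun t : ℝ => (1 + t / 2) ^ (-(b - 1))) atTop (nhds 0) := by
    refine (tendsto_rpow_neg_atTop (by linarith : 0 < b - 1)).comp ?_
    exact tendsto_atTop_add_const_left _ _ (tendsto_id.atTop_div_const (by norm_num))
  have h2 : Tendsto (fun t : ℝ => t * (1 + t / 2) ^ (-b)) atTop (nhds 0) := by
    refine squeeze_zero' (g := fun t : ℝ => 2 * (1 + t / 2) ^ (-(b - 1))) ?_ ?_ (by simpa using h1.const_mul 2)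
    · filter_upwards [eventually_ge_atTop 0] with t ht
      positivity
    · filter_upwards [eventually_ge_atTop 0] with t ht
      have hp : 0 < 1 + t / 2 := by positivity
      have : (1 + t / 2) ^ (-(b - 1)) = (1 + t / 2) * (1 + t / 2) ^ (-b) := by
        rw [show -(b-1) = 1 + (-b) by ring, Real.rpow_add hp, Real.rpow_one]
      rw [this]
      have h3 : 0 ≤ (1 + t / 2) ^ (-b) := by positivity
      nlinarith
  simpa using h2.const_mul C

/-- asymptotics of the Duhamel term -/
theorem duhamel {N : ℕ} {g G : ℝ → Eu N → ℝ} (hg0 : ∀ τ y, 0 ≤ g τ y) (hgm : ∀ τ, Measurable (g τ))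
    {A b : ℝ} (hA : 0 ≤ A) (hb : 1 < b)
    (hsup : ∀ τ, 0 < τ → ∀ᵐ y, g τ y ≤ A * (1 + τ) ^ (-(b + N)))
    (hmass : ∀ τ, 0 < τ → ∫⁻ y, ENNReal.ofReal (g τ y) ≤ ENNReal.ofReal (A * (1 + τ) ^ (-b)))
    (hG : Measurable (fun q : ℝ × Eu N => G q.1 q.2))
    (hd : ∀ t, 0 < t → good N g t ∨ g t = G t) :
    ∃ ε : ℝ → ℝ≥0∞, Tendsto ε atTop (nhds 0) ∧ ∀ t, 0 < t →
      (∀ x, ‖(∫ τ in (0:ℝ)..t, hh N g t τ x) -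
        (∫⁻ τ in Set.Ioi (0:ℝ), ∫⁻ y, ENNReal.ofReal (g τ y)).toReal * Pt N (t + 1) x‖ₑ
          ≤ ε t * ENNReal.ofReal (t ^ (-(N:ℝ)))) ∧
      ∫⁻ x, ‖(∫ τ in (0:ℝ)..t, hh N g t τ x) -
        (∫⁻ τ in Set.Ioi (0:ℝ), ∫⁻ y, ENNReal.ofReal (g τ y)).toReal * Pt N (t + 1) x‖ₑ ≤ ε t := by
  have hkp := kap_pos N
  have hdecr : ∀ c : ℝ, 0 ≤ c → ∀ s τ : ℝ, 0 ≤ s → s ≤ τ → (1 + τ) ^ (-c) ≤ (1 + s) ^ (-c) := by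
    intro c hc s τ hs hsτ
    exact Real.rpow_le_rpow_of_nonpos (by linarith) (by linarith) (by linarith)
  have hle1 : ∀ c : ℝ, 0 ≤ c → ∀ τ : ℝ, 0 < τ → (1 + τ) ^ (-c) ≤ 1 := by
    intro c hc τ hτ
    simpa using hdecr c hc 0 τ le_rfl hτ.le
  have hgi : ∀ τ, 0 < τ → Integrable (g τ) := by
    intro τ hτ
    refine ⟨(hgm τ).aestronglyMeasurable, ?_⟩
    rw [hasFiniteIntegral_iff_ofReal (Eventually.of_forall (hg0 τ))]
    exact (hmass τ hτ).trans_lt ENNReal.ofReal_lt_top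
  obtain ⟨κ, hκf, hκ⟩ := exists_kernel hg0 hgm hgi (A := ENNReal.ofReal A) ENNReal.ofReal_ne_top
    (fun τ hτ => (hmass τ hτ).trans (ENNReal.ofReal_le_ofReal
      (mul_le_of_le_one_right hA (hle1 b (by linarith) τ hτ)))) hG hd
  set ρ : Measure ℝ := volume.restrict (Set.Ioi 0) with hρ
  set ν : Measure (ℝ × Eu N) := ρ.compProd κ with hν
  set M : ℝ≥0∞ := ∫⁻ τ in Set.Ioi (0:ℝ), ∫⁻ y, ENNReal.ofReal (g τ y) with hM
  have hκu : ∀ᵐ τ ∂ρ, κ τ Set.univ = ∫⁻ y, ENNReal.ofReal (g τ y) := by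
    filter_upwards [hκ] with τ h
    rw [h, withDensity_apply _ MeasurableSet.univ, setLIntegral_univ]
  have hνu : ν Set.univ = M := by
    rw [hν, Measure.compProd_apply MeasurableSet.univ]
    simp only [Set.preimage_univ]
    exact lintegral_congr_ae hκu
  have hMfin : M < ⊤ := by
    have hI : IntegrableOn (fun τ : ℝ => A * (1 + τ) ^ (-b)) (Set.Ioi 0) := by
      refine Integrable.const_mul ?_ A
      have h1 := integrableOn_add_rpow_Ioi_of_lt (a := -b) (c := 0) (m := 1) (by linarith) (by norm_num)
      simp only [add_comm _ (1:ℝ)] at h1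
      exact h1
    refine lt_of_le_of_lt ?_ hI.lintegral_lt_top
    refine lintegral_mono_ae ?_
    exact (ae_restrict_iff' measurableSet_Ioi).2 (Eventually.of_forall fun τ hτ => hmass τ hτ)
  haveI hνf : IsFiniteMeasure ν := ⟨by rw [hνu]; exact hMfin⟩
  have hν0 : ∀ᵐ ω ∂ν, 0 ≤ ω.1 := by
    rw [hν]
    refine Measure.ae_compProd_of_ae_ae (measurableSet_le measurable_const measurable_fst) ?_
    refine (ae_restrict_iff' measurableSet_Ioi).2 (Eventually.of_forall fun τ hτ => ?_)
    exact Eventually.of_forall fun y => le_of_lt hτ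
  obtain ⟨ε1, hε1, h1⟩ := asym ν (fun _ => (1:ℝ)) (integrable_const _) Prod.fst Prod.snd measurable_fst
    measurable_snd hν0
  simp only [mul_one] at h1
  set ε2 : ℝ → ℝ≥0∞ := fun t => ENNReal.ofReal ((2:ℝ) ^ (N:ℝ) * (kap N * A) * (t * (1 + t / 2) ^ (-b))) with hε2
  have hepst : Tendsto ε2 atTop (nhds 0) := by
    have := ENNReal.tendsto_ofReal (eps_tendsto (C := (2:ℝ) ^ (N:ℝ) * (kap N * A)) hb)
    rw [ENNReal.ofReal_zero] at this
    exact this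
  refine ⟨fun t => ε1 t + ε2 t, by simpa using hε1.add hepst, fun t ht => ?_⟩
  obtain ⟨h1s, h1i⟩ := h1 t ht
  -- measurability of the integrand via the kernel
  set a : ℝ × Eu N → ℝ≥0∞ := fun q => ∫⁻ y, ENNReal.ofReal (Pt N (t - q.1) (q.2 - y)) ∂(κ q.1) with ha
  have ham : Measurable a := by
    have := Measurable.lintegral_kernel_prod_right' (κ := κ.comap (Prod.fst : ℝ × Eu N → ℝ) measurable_fst)
      (f := fun q : (ℝ × Eu N) × Eu N => ENNReal.ofReal (Pt N (t - q.1.1) (q.1.2 - q.2)))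
      (((measurable_Pt N).comp (f := fun q : (ℝ × Eu N) × Eu N => (t - q.1.1, q.1.2 - q.2))
        (by fun_prop)).ennreal_ofReal)
    exact this
  have hha : ∀ᵐ τ ∂(volume : Measure ℝ), τ ∈ Set.Ioc 0 t → 
      τ < t ∧ κ τ = volume.withDensity (fun y => ENNReal.ofReal (g τ y)) ∧
      ∀ x, ENNReal.ofReal (hh N g t τ x) = a (τ, x) := by
    have h2 := (ae_restrict_iff' measurableSet_Ioi).1 hκ
    have h3 : ∀ᵐ τ ∂(volume : Measure ℝ), τ ≠ t := by
      rw [ae_iff]; simp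
    filter_upwards [h2, h3] with τ h2 h3 h4
    have h5 : τ < t := lt_of_le_of_ne h4.2 h3
    exact ⟨h5, h2 h4.1, fun x => (hh_dens' hg0 hgm h5 (hgi τ h4.1) x _ (h2 h4.1)).symm⟩
  have hbd : ∀ x τ, 0 < τ → τ < t → ∀ s, 0 ≤ s → s ≤ τ →
      ‖hh N g t τ x‖ ≤ kap N * (A * (1 + s) ^ (-(b + N))) := by
    intro x τ hτ hτt s hs hsτ
    rw [Real.norm_of_nonneg (hh_nonneg hg0 hτt x)]
    refine (hh_le hg0 hτt (hsup τ hτ) x).trans ?_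
    have := hdecr (b + N) (by positivity) s τ hs hsτ
    gcongr
  have hIx : ∀ x, IntegrableOn (fun τ => hh N g t τ x) (Set.Ioc 0 t) := by
    intro x
    refine Integrable.of_bound (C := kap N * (A * (1 + 0) ^ (-(b + (N:ℝ))))) ?_ ?_
    · refine AEStronglyMeasurable.congr (f := fun τ => (a (τ, x)).toReal) ?_ ?_
      · exact (ham.comp (measurable_prodMk_right)).ennreal_toReal.aestronglyMeasurable
      · refine (ae_restrict_iff' measurableSet_Ioc).2 ?_
        filter_upwards [hha] with τ h3 h4
        obtain ⟨h5, h6, h7⟩ := h3 h4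
        rw [← h7 x, ENNReal.toReal_ofReal (hh_nonneg hg0 h5 x)]
    · refine (ae_restrict_iff' measurableSet_Ioc).2 ?_
      filter_upwards [hha] with τ h3 h4
      exact hbd x τ h4.1 (h3 h4).1 0 le_rfl h4.1.le
  have hdec : ∀ x, (∫ τ in (0:ℝ)..t, hh N g t τ x) - M.toReal * Pt N (t + 1) x
      = (∫ ω, Dk N t ω.1 ω.2 x ∂ν) + ∫ τ in (t/2)..t, hh N g t τ x := by
    intro x
    have hi1 : IntervalIntegrable (fun τ => hh N g t τ x) volume 0 (t/2) := by
      rw [intervalIntegrable_iff_integrableOn_Ioc_of_le (by linarith)]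
      exact (hIx x).mono_set (Set.Ioc_subset_Ioc_right (by linarith))
    have hi2 : IntervalIntegrable (fun τ => hh N g t τ x) volume (t/2) t := by
      rw [intervalIntegrable_iff_integrableOn_Ioc_of_le (by linarith)]
      exact (hIx x).mono_set (Set.Ioc_subset_Ioc_left (by linarith))
    rw [← intervalIntegral.integral_add_adjacent_intervals hi1 hi2]
    have hK : Integrable (fun ω : ℝ × Eu N => if ω.1 < t / 2 then Pt N (t - ω.1) (x - ω.2) else 0) ν := by
      refine Integrable.of_bound (C := cN N * (t/2) ^ (-(N:ℝ))) ?_ ?_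
      · refine (Measurable.ite (measurableSet_lt measurable_fst measurable_const) ?_ measurable_const).aestronglyMeasurable
        exact (measurable_Pt N).comp (f := fun q : (ℝ × Eu N) => (t - q.1, x - q.2)) (by fun_prop)
      · refine Eventually.of_forall fun ω => ?_
        have hc := cN_pos N
        split_ifs with h
        · have h3 : 0 < t - ω.1 := by linarith
          rw [Real.norm_of_nonneg (Pt_pos N h3 _).le]
          refine (Pt_le N h3 _).trans ?_
          refine mul_le_mul_of_nonneg_left ?_ hc.le
          exact Real.rpow_le_rpow_of_nonpos (by linarith) (by linarith) (by simp)
        · rw [norm_zero]; positivity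
    have e1 : ∫ ω, Dk N t ω.1 ω.2 x ∂ν =
        (∫ ω, (if ω.1 < t / 2 then Pt N (t - ω.1) (x - ω.2) else 0) ∂ν) - M.toReal * Pt N (t + 1) x := by
      unfold Dk
      rw [integral_sub hK (integrable_const _), integral_const, smul_eq_mul, Measure.real, hνu]
    have e2 : (∫ ω, (if ω.1 < t / 2 then Pt N (t - ω.1) (x - ω.2) else 0) ∂ν)
        = ∫ τ in (0:ℝ)..(t/2), hh N g t τ x := by
      rw [hν, Measure.integral_compProd hK, intervalIntegral.integral_of_le (by linarith),
        integral_Ioc_eq_integral_Ioo]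
      have e3 : ∀ᵐ τ ∂ρ, (∫ y, (if τ < t / 2 then Pt N (t - τ) (x - y) else 0) ∂(κ τ)) =
          (Set.Iio (t/2)).indicator (fun τ => hh N g t τ x) τ := by
        filter_upwards [hκ] with τ h
        by_cases h5 : τ < t / 2
        · rw [Set.indicator_of_mem (show τ ∈ Set.Iio (t/2) from h5)]
          simp only [h5, if_true]
          exact hh_dens hg0 hgm t τ x _ h
        · rw [Set.indicator_of_notMem (show τ ∉ Set.Iio (t/2) from h5)]
          simp [h5]
      rw [integral_congr_ae e3, integral_indicator measurableSet_Iio, hρ,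
        Measure.restrict_restrict measurableSet_Iio, Set.inter_comm, Set.Ioi_inter_Iio]
    rw [e1, e2]; ring
  simp only [hdec]
  have hJs : ∀ x, ‖∫ τ in (t/2)..t, hh N g t τ x‖ₑ ≤ ε2 t * ENNReal.ofReal (t ^ (-(N:ℝ))) := by
    intro x
    have h3 : ‖∫ τ in (t/2)..t, hh N g t τ x‖ ≤ kap N * (A * (1 + t/2) ^ (-(b + N))) * |t - t/2| := by
      refine intervalIntegral.norm_integral_le_of_norm_le_const_ae ?_
      filter_upwards [hha] with τ h4 h5
      rw [Set.uIoc_of_le (by linarith)] at h5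
      have h6 : τ ∈ Set.Ioc 0 t := ⟨by linarith [h5.1], h5.2⟩
      exact hbd x τ h6.1 (h4 h6).1 (t/2) (by positivity) h5.1.le
    rw [← ofReal_norm, hε2, ← ENNReal.ofReal_mul (by positivity)]
    refine ENNReal.ofReal_le_ofReal (h3.trans ?_)
    have e1 : |t - t/2| = t / 2 := by rw [abs_of_pos (by linarith)]; ring
    have e2 : (1 + t/2) ^ (-(b + (N:ℝ))) = (1 + t/2) ^ (-b) * (1 + t/2) ^ (-(N:ℝ)) := by
      rw [← Real.rpow_add (by positivity)]; ring_nf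
    have e3 : (1 + t/2) ^ (-(N:ℝ)) ≤ (2:ℝ) ^ (N:ℝ) * t ^ (-(N:ℝ)) := by
      have : (t/2) ^ (-(N:ℝ)) = (2:ℝ) ^ (N:ℝ) * t ^ (-(N:ℝ)) := by
        rw [Real.div_rpow ht.le (by norm_num), Real.rpow_neg (by norm_num : (0:ℝ) ≤ 2)]
        field_simp
      rw [← this]
      exact Real.rpow_le_rpow_of_nonpos (by linarith) (by linarith) (by simp)
    rw [e1, e2]
    have e4 : 0 ≤ kap N * A * (1 + t/2) ^ (-b) * t := by positivity
    calc kap N * (A * ((1 + t / 2) ^ (-b) * (1 + t / 2) ^ (-(N:ℝ)))) * (t / 2)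
        = (kap N * A * (1 + t/2) ^ (-b) * t) / 2 * (1 + t / 2) ^ (-(N:ℝ)) := by ring
      _ ≤ (kap N * A * (1 + t/2) ^ (-b) * t) * ((2:ℝ) ^ (N:ℝ) * t ^ (-(N:ℝ))) := by
          refine mul_le_mul (by linarith) e3 (by positivity) e4
      _ = _ := by ring
  have hJi : ∫⁻ x, ‖∫ τ in (t/2)..t, hh N g t τ x‖ₑ ≤ ε2 t := by
    have s1 : ∀ x, ‖∫ τ in (t/2)..t, hh N g t τ x‖ₑ ≤ ∫⁻ τ in Set.Ioc (t/2) t, a (τ, x) := by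
      intro x
      rw [intervalIntegral.integral_of_le (by linarith)]
      refine (enorm_integral_le_lintegral_enorm _).trans (lintegral_mono_ae ?_)
      refine (ae_restrict_iff' measurableSet_Ioc).2 ?_
      filter_upwards [hha] with τ h4 h5
      have h6 : τ ∈ Set.Ioc 0 t := ⟨by linarith [h5.1], h5.2⟩
      obtain ⟨h7, h8, h9⟩ := h4 h6
      rw [Real.enorm_of_nonneg (hh_nonneg hg0 h7 x), h9 x]
    calc ∫⁻ x, ‖∫ τ in (t/2)..t, hh N g t τ x‖ₑ
        ≤ ∫⁻ x, ∫⁻ τ in Set.Ioc (t/2) t, a (τ, x) := lintegral_mono s1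
      _ = ∫⁻ τ in Set.Ioc (t/2) t, ∫⁻ x, a (τ, x) := by
          rw [lintegral_lintegral_swap]
          exact (ham.comp measurable_swap).aemeasurable
      _ ≤ ∫⁻ τ in Set.Ioc (t/2) t, ENNReal.ofReal (kap N * (A * (1 + t/2) ^ (-b))) := by
          refine lintegral_mono_ae ((ae_restrict_iff' measurableSet_Ioc).2 ?_)
          filter_upwards [hha] with τ h4 h5
          have h6 : τ ∈ Set.Ioc 0 t := ⟨by linarith [h5.1], h5.2⟩
          obtain ⟨h7, h8, h9⟩ := h4 h6
          have s2 : ∫⁻ x, a (τ, x) = ∫⁻ y, ENNReal.ofReal (kap N) ∂(κ τ) := by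
            simp only [ha]
            rw [lintegral_lintegral_swap]
            · refine lintegral_congr fun y => ?_
              exact lintegral_Pt_sub N (by linarith) y
            · exact ((measurable_Pt N).comp (f := fun q : Eu N × Eu N => (t - τ, q.1 - q.2))
                (by fun_prop)).ennreal_ofReal.aemeasurable
          rw [s2, lintegral_const, h8, withDensity_apply _ MeasurableSet.univ, setLIntegral_univ,
            ENNReal.ofReal_mul hkp.le]
          refine mul_le_mul' le_rfl ((hmass τ h6.1).trans (ENNReal.ofReal_le_ofReal ?_))
          have := hdecr b (by linarith) (t/2) τ (by positivity) h5.1.le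
          gcongr
      _ ≤ ε2 t := by
          rw [setLIntegral_const, Real.volume_Ioc, ← ENNReal.ofReal_mul (by positivity)]
          refine ENNReal.ofReal_le_ofReal ?_
          have h2 : (1:ℝ) ≤ (2:ℝ) ^ (N:ℝ) := Real.one_le_rpow (by norm_num) (by positivity)
          have e4 : 0 ≤ kap N * A * (1 + t/2) ^ (-b) * t := by positivity
          nlinarith
  constructor
  · intro x
    refine (enorm_add_le _ _).trans ?_
    rw [add_mul]
    exact add_le_add (h1s x) (hJs x)
  · refine (lintegral_mono fun x => enorm_add_le _ _).trans ?_
    rw [lintegral_add_left]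
    · exact add_le_add h1i hJi
    · have := (measurable_Dk N t).stronglyMeasurable.integral_prod_left' (μ := ν)
      exact this.measurable.enorm

theorem norm_gradient_eq {N : ℕ} (f : Eu N → ℝ) (x : Eu N) : ‖gradient f x‖ = ‖fderiv ℝ f x‖ := by
  unfold gradient
  exact LinearIsometryEquiv.norm_map _ _

theorem enn_div {c : ℝ} (hc : 0 < c) {E M : ℝ≥0∞} (hM : M ≠ ⊤) (h : ENNReal.ofReal c * E ≤ M) :
    E ≤ ENNReal.ofReal (M.toReal * c⁻¹) := by
  rw [ENNReal.ofReal_mul ENNReal.toReal_nonneg, ENNReal.ofReal_toReal hM, ENNReal.ofReal_inv_of_pos hc,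
    ← div_eq_mul_inv]
  rw [ENNReal.le_div_iff_mul_le (Or.inl (by simpa using hc)) (Or.inl ENNReal.ofReal_ne_top), mul_comm]
  exact h

theorem stmt_18 (N : ℕ) (hN : 1 ≤ N) (p : ℝ) (hp : 1 < p)
    (u0 : EuclideanSpace ℝ (Fin N) → ℝ) (hu0 : Integrable u0 volume)
    (v : EuclideanSpace ℝ (Fin N) → ℝ → ℝ)
    (hdiff : ∀ t : ℝ, 0 < t → Differentiable ℝ (fun x => v x t))
    (hmild : ∀ t : ℝ, 0 < t → ∀ᵐ x ∂(volume : Measure (EuclideanSpace ℝ (Fin N))),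
        v x t = (∫ y, Pt N t (x - y) * u0 y)
          + ∫ τ in (0:ℝ)..t, ∫ y, Pt N (t - τ) (x - y)
              * ‖gradient (fun z => v z τ) y‖ ^ p)
    (hdecay0 : ∀ q : ℝ≥0∞, 1 ≤ q →
        ∃ M : ℝ≥0∞, M ≠ ⊤ ∧ ∀ t : ℝ, 0 < t →
          ENNReal.ofReal ((1 + t) ^ ((N : ℝ) * (1 - (1 / q).toReal)))
            * eLpNorm (fun x => v x t) q volume ≤ M)
    (hdecay1 : ∀ q : ℝ≥0∞, 1 ≤ q →
        ∃ M : ℝ≥0∞, M ≠ ⊤ ∧ ∀ t : ℝ, 0 < t →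
          ENNReal.ofReal ((1 + t) ^ ((N : ℝ) * (1 - (1 / q).toReal) + 1))
            * eLpNorm (fun x => ‖gradient (fun z => v z t) x‖) q volume ≤ M)
    (Cstar : ℝ)
    (hCstar : Cstar = (∫ x, u0 x)
        + (∫⁻ τ in Set.Ioi (0:ℝ), ∫⁻ x : EuclideanSpace ℝ (Fin N),
            ENNReal.ofReal (‖gradient (fun z => v z τ) x‖ ^ p)).toReal) :
    ∀ q : ℝ≥0∞, 1 ≤ q →
      Tendsto (fun t : ℝ => ENNReal.ofReal (t ^ ((N : ℝ) * (1 - (1 / q).toReal)))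
          * eLpNorm (fun x => v x t - Cstar * Pt N (t + 1) x) q volume)
        atTop (nhds 0) := by
  have hp0 : 0 < p := by linarith
  set g : ℝ → Eu N → ℝ := fun τ y => ‖gradient (fun z => v z τ) y‖ ^ p with hg
  have hg0 : ∀ τ y, 0 ≤ g τ y := fun τ y => by positivity
  have hgrm : ∀ τ, Measurable (fun y => ‖gradient (fun z => v z τ) y‖) := by
    intro τ
    simp only [norm_gradient_eq]
    exact (measurable_fderiv ℝ _).norm
  have hgm : ∀ τ, Measurable (g τ) := fun τ => (hgrm τ).pow_const p
  set b : ℝ := (N:ℝ) * (p - 1) + p with hb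
  have hb1 : 1 < b := by
    have : 0 ≤ (N:ℝ) * (p - 1) := mul_nonneg (by positivity) (by linarith)
    linarith
  obtain ⟨M1, hM1, h1⟩ := hdecay1 ⊤ le_top
  obtain ⟨M2, hM2, h2⟩ := hdecay1 (ENNReal.ofReal p) (by
    rw [← ENNReal.ofReal_one]; exact ENNReal.ofReal_le_ofReal hp.le)
  set A : ℝ := M1.toReal ^ p + M2.toReal ^ p with hA
  have hA1 : 0 ≤ M1.toReal ^ p := by positivity
  have hA2 : 0 ≤ M2.toReal ^ p := by positivity
  have hA0 : 0 ≤ A := by positivity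
  have hsup : ∀ τ, 0 < τ → ∀ᵐ y, g τ y ≤ A * (1 + τ) ^ (-(b + N)) := by
    intro τ hτ
    have hc : 0 < (1 + τ) ^ ((N:ℝ) + 1) := by positivity
    have h3 := h1 τ hτ
    simp only [one_div, ENNReal.inv_top, ENNReal.toReal_zero, sub_zero, mul_one] at h3
    have h4 := enn_div hc hM1 h3
    rw [eLpNorm_exponent_top] at h4
    filter_upwards [ae_le_eLpNormEssSup (f := fun x => ‖gradient (fun z => v z τ) x‖) (μ := volume)] with y hy
    have h5 := hy.trans h4
    rw [← ofReal_norm, norm_norm, ENNReal.ofReal_le_ofReal_iff (by positivity)] at h5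
    have h6 : g τ y ≤ (M1.toReal * ((1 + τ) ^ ((N:ℝ) + 1))⁻¹) ^ p :=
      Real.rpow_le_rpow (norm_nonneg _) h5 hp0.le
    refine h6.trans ?_
    rw [Real.mul_rpow ENNReal.toReal_nonneg (by positivity), ← Real.rpow_neg (by positivity),
      ← Real.rpow_mul (by positivity)]
    have e : -((N:ℝ) + 1) * p = -(b + N) := by rw [hb]; ring
    rw [e]
    have : 0 ≤ (1 + τ) ^ (-(b + N)) := by positivity
    exact mul_le_mul_of_nonneg_right (by linarith) this
  have hmass : ∀ τ, 0 < τ → ∫⁻ y, ENNReal.ofReal (g τ y) ≤ ENNReal.ofReal (A * (1 + τ) ^ (-b)) := by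
    intro τ hτ
    have hc : 0 < (1 + τ) ^ ((N:ℝ) * (1 - (1 / ENNReal.ofReal p).toReal) + 1) := by positivity
    have h4 := enn_div hc hM2 (h2 τ hτ)
    have e1 : (1 / ENNReal.ofReal p).toReal = 1 / p := by
      rw [one_div, ENNReal.toReal_inv, ENNReal.toReal_ofReal hp0.le, one_div]
    rw [e1, eLpNorm_eq_lintegral_rpow_enorm_toReal (by simpa using hp0) ENNReal.ofReal_ne_top,
      ENNReal.toReal_ofReal hp0.le] at h4
    have h5 := ENNReal.rpow_le_rpow h4 hp0.le
    rw [← ENNReal.rpow_mul, one_div, inv_mul_cancel₀ hp0.ne', ENNReal.rpow_one,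
      ENNReal.ofReal_rpow_of_nonneg (by positivity) hp0.le] at h5
    have e2 : ∫⁻ y, ENNReal.ofReal (g τ y) = ∫⁻ y, ‖‖gradient (fun z => v z τ) y‖‖ₑ ^ p := by
      refine lintegral_congr fun y => ?_
      rw [← ofReal_norm, norm_norm, ENNReal.ofReal_rpow_of_nonneg (norm_nonneg _) hp0.le]
    rw [e2]
    refine h5.trans (ENNReal.ofReal_le_ofReal ?_)
    rw [Real.mul_rpow ENNReal.toReal_nonneg (by positivity), ← Real.rpow_neg (by positivity),
      ← Real.rpow_mul (by positivity)]
    have e : -((N:ℝ) * (1 - p⁻¹) + 1) * p = -b := by rw [hb]; field_simp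
    rw [e]
    have : 0 ≤ (1 + τ) ^ (-b) := by positivity
    exact mul_le_mul_of_nonneg_right (by linarith) this
  have hgi : ∀ τ, 0 < τ → Integrable (g τ) := by
    intro τ hτ
    refine ⟨(hgm τ).aestronglyMeasurable, ?_⟩
    rw [hasFiniteIntegral_iff_ofReal (Eventually.of_forall (hg0 τ))]
    exact (hmass τ hτ).trans_lt ENNReal.ofReal_lt_top
  -- the bad-time comparison function
  set G : ℝ → Eu N → ℝ := fun t y =>
    ‖fderiv ℝ (fun z => ∫ y', Pt N (Real.exp (Real.log t)) (z - y') * u0 y') y‖ ^ p with hGdef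
  have hG : Measurable (fun q : ℝ × Eu N => G q.1 q.2) := by
    have hcont : Continuous (Function.uncurry (fun (a : ℝ) (z : Eu N) => ∫ y', Pt N (Real.exp a) (z - y') * u0 y')) := by
      rw [continuous_iff_continuousAt]
      rintro ⟨a, z⟩
      exact ContinuousAt.comp (f := fun q : ℝ × Eu N => (Real.exp q.1, q.2)) (x := (a, z))
        (g := fun q : ℝ × Eu N => ∫ y, Pt N q.1 (q.2 - y) * u0 y)
        (conv_continuousAt u0 hu0 (Real.exp a, z) (Real.exp_pos a)) (by fun_prop)
    have h3 := measurable_fderiv_with_param (𝕜 := ℝ) hcont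
    have h4 := h3.comp (f := fun q : ℝ × Eu N => (Real.log q.1, q.2)) (by fun_prop)
    exact h4.norm.pow_const p
  have hd : ∀ t, 0 < t → good N g t ∨ g t = G t := by
    intro t ht
    have hB : ∀ τ, 0 < τ → ∀ᵐ y, g τ y ≤ A := by
      intro τ hτ
      filter_upwards [hsup τ hτ] with y hy
      refine hy.trans (mul_le_of_le_one_right hA0 ?_)
      exact Real.rpow_le_one_of_one_le_of_nonpos (by linarith) (by
        have : (0:ℝ) ≤ N := by positivity
        linarith)
    have hw : Continuous (fun x => v x t - ∫ y, Pt N t (x - y) * u0 y) :=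
      (hdiff t ht).continuous.sub (conv_continuous u0 hu0 ht)
    rcases dicho hg0 hgi hB ht _ hw (by
      filter_upwards [hmild t ht] with x hx
      rw [hx]
      simp only [hh, hg]
      ring) with h | h
    · exact Or.inl h
    · right
      have hve : (fun z => v z t) = fun z => ∫ y', Pt N (Real.exp (Real.log t)) (z - y') * u0 y' := by
        funext z
        rw [Real.exp_log ht]
        exact sub_eq_zero.1 (h z)
      funext y
      simp only [hg, hGdef]
      rw [norm_gradient_eq, hve]
  obtain ⟨ε1, hε1, hD⟩ := duhamel hg0 hgm hA0 hb1 hsup hmass hG hd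
  obtain ⟨ε2, hε2, hL⟩ := asym (N := N) (volume : Measure (Eu N)) u0 hu0 (fun _ => 0) id measurable_const
    measurable_id (Eventually.of_forall fun _ => le_rfl)
  intro q hq
  have hε : Tendsto (fun t => ε2 t + ε1 t) atTop (nhds 0) := by simpa using hε2.add hε1
  refine tendsto_of_tendsto_of_tendsto_of_le_of_le' tendsto_const_nhds hε
    (Eventually.of_forall fun t => zero_le) ?_
  filter_upwards [eventually_gt_atTop 0] with t ht
  obtain ⟨hDs, hDi⟩ := hD t ht
  obtain ⟨hLs, hLi⟩ := hL t ht
  have hlin : ∀ x, ∫ y, Dk N t 0 (id y) x * u0 y = (∫ y, Pt N t (x - y) * u0 y) - (∫ y, u0 y) * Pt N (t + 1) x := by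
    intro x
    have : ∀ y, Dk N t 0 (id y) x * u0 y = Pt N t (x - y) * u0 y - Pt N (t + 1) x * u0 y := by
      intro y
      simp only [Dk, id, sub_zero, if_pos (by linarith : (0:ℝ) < t / 2)]
      ring
    simp only [this]
    rw [integral_sub (conv_integrable u0 hu0 ht x) (hu0.const_mul _), integral_const_mul]
    ring
  have hdec : ∀ᵐ x, v x t - Cstar * Pt N (t + 1) x = (∫ y, Dk N t 0 (id y) x * u0 y) +
      ((∫ τ in (0:ℝ)..t, hh N g t τ x) -
        (∫⁻ τ in Set.Ioi (0:ℝ), ∫⁻ y, ENNReal.ofReal (g τ y)).toReal * Pt N (t + 1) x) := by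
    filter_upwards [hmild t ht] with x hx
    rw [hx, hlin x, hCstar]
    simp only [hh, hg]
    ring
  refine interp_bound N _ ht _ ?_ ?_ q hq
  · filter_upwards [hdec] with x hx
    rw [hx, add_mul]
    exact (enorm_add_le _ _).trans (add_le_add (hLs x) (hDs x))
  · rw [lintegral_congr_ae (hdec.mono fun x hx => congrArg enorm hx)]
    refine (lintegral_mono fun x => enorm_add_le _ _).trans ?_
    rw [lintegral_add_left]
    · exact add_le_add hLi hDi
    · simp only [hlin]
      have := conv_continuous u0 hu0 ht
      have h3 := continuous_Pt N (t + 1)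
      exact (this.sub (continuous_const.mul h3)).measurable.enorm
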